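/- arXiv:1903.12244 — 6 statements merged into one kernel-verified Lean document; each statement's English description precedes it below -/
import Mathlib

section
/- Let p, q ∈ (1, ∞) satisfy 1/p + 1/q < 1. Then for every bounded bilinear form A : ℓ_p × ℓ_q → 𝕂 that is nonnegative (i.e., A(e_{j₁}, e_{j₂}) ≥ 0 for all j₁, j₂), one has ( Σ_{j₁=1}^∞ ( Σ_{j₂=1}^∞ A(e_{j₁}, e_{j₂})^{q*} )^{(1/q*)·(1/(1−(1/p+1/q)))} )^{1−(1/p+1/q)} ≤ ‖A‖, where ‖A‖ is the operator norm of A. -/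
open scoped ENNReal

/-!
Put `l = 1 / (1 - (1/p + 1/q))`, so that `1/p + 1/l = 1/q*`, and write `a j k = A(e_j, e_k)`.
By duality between `ℓ_q` and `ℓ_{q*}`, every `x ≥ 0` satisfies `‖∑ j, x_j a_j‖_{q*} ≤ ‖A‖ ‖x‖_p`,
where `a_j` is the `j`-th row. Since the entries are nonnegative and `q* ≥ 1`, superadditivity of
`t ↦ t ^ q*` bounds the left-hand side from below by `(∑ j, (‖a_j‖_{q*} x_j) ^ q*) ^ (1 / q*)`.
So multiplication by `j ↦ ‖a_j‖_{q*}` maps `ℓ_p` into `ℓ_{q*}` with norm at most `‖A‖`, and a second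
use of duality says that the norm of such a multiplier is its `ℓ_l` norm.
-/

open scoped NNReal

section FinsetLpNorm

variable {ι κ : Type*} {p q r l : ℝ} {s : Finset ι} {f : ι → ℝ≥0} {M : ℝ≥0}

/-- The `ℓ_p` norm of `f` restricted to the finite set `s`, for a real exponent `p ≠ 0`. The
inequality is proved for this norm first; values in `ℝ≥0` encode the positivity assumption. -/
noncomputable def finsetLpNorm (p : ℝ) (s : Finset ι) (f : ι → ℝ≥0) : ℝ≥0 :=
  (∑ i ∈ s, f i ^ p) ^ (1 / p)

theorem finsetLpNorm_rpow_self (hp : p ≠ 0) : finsetLpNorm p s f ^ p = ∑ i ∈ s, f i ^ p := by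
  rw [finsetLpNorm, ← NNReal.rpow_mul, one_div_mul_cancel hp, NNReal.rpow_one]

theorem finsetLpNorm_div_rpow (hr : r ≠ 0) :
    finsetLpNorm (p / r) s (fun i => f i ^ r) = finsetLpNorm p s f ^ r := by
  simp only [finsetLpNorm, ← NNReal.rpow_mul, mul_div_cancel₀ p hr, one_div_div,
    one_div_mul_eq_div]

theorem finsetLpNorm_le_of_forall_sum_mul_le (hpq : p.HolderConjugate q)
    (h : ∀ g : ι → ℝ≥0, ∑ i ∈ s, f i * g i ≤ M * finsetLpNorm q s g) :
    finsetLpNorm p s f ≤ M := by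
  obtain ⟨g, hg : ∑ i ∈ s, g i ^ q ≤ 1, hfg⟩ := (NNReal.isGreatest_Lp s f hpq).1
  calc finsetLpNorm p s f = ∑ i ∈ s, f i * g i := hfg.symm
    _ ≤ M * finsetLpNorm q s g := h g
    _ ≤ M := mul_le_of_le_one_right' (NNReal.rpow_le_one hg hpq.symm.one_div_nonneg)

theorem finsetLpNorm_le_of_forall_finsetLpNorm_mul_le (hplr : p.HolderTriple l r)
    (h : ∀ g : ι → ℝ≥0, finsetLpNorm r s (fun i => f i * g i) ≤ M * finsetLpNorm p s g) :
    finsetLpNorm l s f ≤ M := by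
  have hr : 0 < r := hplr.pos'
  rw [← NNReal.rpow_le_rpow_iff hr, ← finsetLpNorm_div_rpow hr.ne']
  refine finsetLpNorm_le_of_forall_sum_mul_le hplr.holderConjugate_div_div.symm fun g => ?_
  obtain ⟨u, rfl⟩ : ∃ u : ι → ℝ≥0, g = fun i => u i ^ r :=
    ⟨fun i => g i ^ r⁻¹, funext fun i => (NNReal.rpow_inv_rpow hr.ne' _).symm⟩
  calc ∑ i ∈ s, f i ^ r * u i ^ r = finsetLpNorm r s (fun i => f i * u i) ^ r := by
        simp only [finsetLpNorm_rpow_self hr.ne', NNReal.mul_rpow]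
    _ ≤ (M * finsetLpNorm p s u) ^ r := NNReal.rpow_le_rpow (h u) hr.le
    _ = M ^ r * finsetLpNorm (p / r) s (fun i => u i ^ r) := by
        rw [NNReal.mul_rpow, finsetLpNorm_div_rpow hr.ne']

theorem sum_rpow_le_rpow_sum (s : Finset ι) (f : ι → ℝ≥0) (hr : 1 ≤ r) :
    ∑ i ∈ s, f i ^ r ≤ (∑ i ∈ s, f i) ^ r := by
  induction s using Finset.cons_induction with
  | empty => simp
  | cons i s hi ih =>
    rw [Finset.sum_cons, Finset.sum_cons]
    exact (add_le_add_right ih _).trans (NNReal.add_rpow_le_rpow_add _ _ hr)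

theorem finsetLpNorm_finsetLpNorm_mul_le (hr : 1 ≤ r) (J : Finset ι) (K : Finset κ)
    (a : ι → κ → ℝ≥0) (x : ι → ℝ≥0) :
    finsetLpNorm r J (fun j => finsetLpNorm r K (a j) * x j) ≤
      finsetLpNorm r K (fun k => ∑ j ∈ J, a j k * x j) := by
  have hr₀ : 0 < r := one_pos.trans_le hr
  rw [← NNReal.rpow_le_rpow_iff hr₀, finsetLpNorm_rpow_self hr₀.ne',
    finsetLpNorm_rpow_self hr₀.ne']
  calc ∑ j ∈ J, (finsetLpNorm r K (a j) * x j) ^ r = ∑ j ∈ J, ∑ k ∈ K, (a j k * x j) ^ r := by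
        simp only [NNReal.mul_rpow, finsetLpNorm_rpow_self hr₀.ne', Finset.sum_mul]
    _ = ∑ k ∈ K, ∑ j ∈ J, (a j k * x j) ^ r := Finset.sum_comm
    _ ≤ ∑ k ∈ K, (∑ j ∈ J, a j k * x j) ^ r :=
        Finset.sum_le_sum fun k _ => sum_rpow_le_rpow_sum J _ hr

theorem finsetLpNorm_finsetLpNorm_le_of_forall_sum_mul_le (hqr : q.HolderConjugate r)
    (hplr : p.HolderTriple l r) {J : Finset ι} {K : Finset κ} {a : ι → κ → ℝ≥0}
    (h : ∀ (x : ι → ℝ≥0) (y : κ → ℝ≥0), ∑ k ∈ K, (∑ j ∈ J, a j k * x j) * y k ≤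
      M * finsetLpNorm p J x * finsetLpNorm q K y) :
    finsetLpNorm l J (fun j => finsetLpNorm r K (a j)) ≤ M :=
  finsetLpNorm_le_of_forall_finsetLpNorm_mul_le hplr fun x =>
    (finsetLpNorm_finsetLpNorm_mul_le hqr.symm.lt.le J K a x).trans
      (finsetLpNorm_le_of_forall_sum_mul_le hqr.symm (h x))

end FinsetLpNorm

section InfiniteSums

variable {ι κ : Type*}

theorem tsum_rpow_tsum_le_of_forall_finset {f : ι → κ → ℝ≥0∞} {u : ℝ} {C : ℝ≥0∞}
    (h : ∀ (J : Finset ι) (K : Finset κ), ∑ j ∈ J, (∑ k ∈ K, f j k) ^ u ≤ C) :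
    ∑' j, (∑' k, f j k) ^ u ≤ C := by
  rw [ENNReal.tsum_eq_iSup_sum]
  refine iSup_le fun J => ?_
  have hlim : Filter.Tendsto (fun K => ∑ j ∈ J, (∑ k ∈ K, f j k) ^ u) Filter.atTop
      (nhds (∑ j ∈ J, (∑' k, f j k) ^ u)) :=
    tendsto_finsetSum J fun j _ =>
      (ENNReal.continuous_rpow_const.tendsto _).comp ENNReal.summable.hasSum
  exact le_of_tendsto' hlim (h J)

theorem tsum_rpow_tsum_rpow_le_of_forall_finsetLpNorm_le {a : ι → κ → ℝ≥0} {r l : ℝ} {M : ℝ≥0}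
    (hr : 0 < r) (hl : 0 < l)
    (h : ∀ (J : Finset ι) (K : Finset κ),
      finsetLpNorm l J (fun j => finsetLpNorm r K (a j)) ≤ M) :
    ∑' j, (∑' k, (a j k : ℝ≥0∞) ^ r) ^ (1 / r * l) ≤ (M : ℝ≥0∞) ^ l := by
  refine tsum_rpow_tsum_le_of_forall_finset fun J K => ?_
  have hrl : 0 ≤ 1 / r * l := by positivity
  have hJK : ∑ j ∈ J, (∑ k ∈ K, a j k ^ r) ^ (1 / r * l) ≤ M ^ l := by
    have hpow := NNReal.rpow_le_rpow (h J K) hl.le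
    rw [finsetLpNorm_rpow_self hl.ne'] at hpow
    simpa only [finsetLpNorm, ← NNReal.rpow_mul] using hpow
  simpa only [ENNReal.ofNNReal_finsetSum, ENNReal.coe_rpow_of_nonneg _ hr.le,
    ENNReal.coe_rpow_of_nonneg _ hl.le, ENNReal.coe_rpow_of_nonneg _ hrl]
    using ENNReal.coe_le_coe.2 hJK

end InfiniteSums

section BilinearForm

variable {ι κ 𝕂 : Type*} [DecidableEq ι] [DecidableEq κ] [RCLike 𝕂] {p q : ℝ}

theorem norm_sum_lp_single_nnreal (hp : 0 < p) (J : Finset ι) (x : ι → ℝ≥0) :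
    ‖∑ j ∈ J, lp.single (E := fun _ : ι => 𝕂) (ENNReal.ofReal p) j ((x j : ℝ) : 𝕂)‖ =
      finsetLpNorm p J x := by
  have hp' : (ENNReal.ofReal p).toReal = p := ENNReal.toReal_ofReal hp.le
  have hnorm := lp.norm_sum_single (E := fun _ : ι => 𝕂) (p := ENNReal.ofReal p)
    (by rwa [hp']) (fun j => ((x j : ℝ) : 𝕂)) J
  simp only [hp', RCLike.norm_ofReal, NNReal.abs_eq] at hnorm
  rw [finsetLpNorm, NNReal.coe_rpow, NNReal.coe_sum]
  simp only [NNReal.coe_rpow]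
  rw [← hnorm, one_div, Real.rpow_rpow_inv (lp.norm_nonneg' _) hp.ne']

theorem lp_single_eq_smul_lp_single_one (P : ℝ≥0∞) (j : ι) (c : 𝕂) :
    lp.single (E := fun _ : ι => 𝕂) P j c = c • lp.single (E := fun _ : ι => 𝕂) P j 1 := by
  rw [← lp.single_smul, smul_eq_mul, mul_one]

theorem apply_sum_lp_single_sum_lp_single {P Q : ℝ≥0∞} [Fact (1 ≤ P)] [Fact (1 ≤ Q)]
    (A : lp (fun _ : ι => 𝕂) P →L[𝕂] lp (fun _ : κ => 𝕂) Q →L[𝕂] 𝕂)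
    (J : Finset ι) (K : Finset κ) (x : ι → 𝕂) (y : κ → 𝕂) :
    A (∑ j ∈ J, lp.single P j (x j)) (∑ k ∈ K, lp.single Q k (y k)) =
      ∑ k ∈ K, (∑ j ∈ J, A (lp.single P j 1) (lp.single Q k 1) * x j) * y k := by
  simp only [lp_single_eq_smul_lp_single_one _ _ (x _), lp_single_eq_smul_lp_single_one _ _ (y _),
    map_sum, map_smul, sum_apply, smul_apply, smul_eq_mul, mul_comm]

theorem sum_sum_mul_mul_le_nnnorm_mul
    [Fact (1 ≤ ENNReal.ofReal p)] [Fact (1 ≤ ENNReal.ofReal q)]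
    {A : lp (fun _ : ι => 𝕂) (ENNReal.ofReal p) →L[𝕂]
      lp (fun _ : κ => 𝕂) (ENNReal.ofReal q) →L[𝕂] 𝕂}
    {a : ι → κ → ℝ≥0}
    (ha : ∀ j k, A (lp.single (ENNReal.ofReal p) j 1) (lp.single (ENNReal.ofReal q) k 1) =
      ((a j k : ℝ) : 𝕂))
    (J : Finset ι) (K : Finset κ) (x : ι → ℝ≥0) (y : κ → ℝ≥0) :
    ∑ k ∈ K, (∑ j ∈ J, a j k * x j) * y k ≤
      ‖A‖₊ * finsetLpNorm p J x * finsetLpNorm q K y := by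
  have hp : 0 < p := one_pos.trans_le (ENNReal.one_le_ofReal.1 Fact.out)
  have hq : 0 < q := one_pos.trans_le (ENNReal.one_le_ofReal.1 Fact.out)
  have hle := A.le_opNorm₂ (∑ j ∈ J, lp.single (ENNReal.ofReal p) j ((x j : ℝ) : 𝕂))
    (∑ k ∈ K, lp.single (ENNReal.ofReal q) k ((y k : ℝ) : 𝕂))
  have hvalue : ∑ k ∈ K, (∑ j ∈ J, ((a j k : ℝ) : 𝕂) * ((x j : ℝ) : 𝕂)) * ((y k : ℝ) : 𝕂) =
      (((∑ k ∈ K, (∑ j ∈ J, a j k * x j) * y k : ℝ≥0) : ℝ) : 𝕂) := by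
    push_cast
    rfl
  simp only [apply_sum_lp_single_sum_lp_single, ha] at hle
  rw [hvalue, RCLike.norm_ofReal, NNReal.abs_eq,
    norm_sum_lp_single_nnreal hp, norm_sum_lp_single_nnreal hq] at hle
  exact_mod_cast hle

end BilinearForm

theorem hardy_littlewood_bilinear_general {ι κ 𝕂 : Type*} [DecidableEq ι] [DecidableEq κ]
    [RCLike 𝕂] {p q qstar : ℝ}
    [Fact (1 ≤ ENNReal.ofReal p)] [Fact (1 ≤ ENNReal.ofReal q)]
    (hqstar : q.HolderConjugate qstar) (h : 1 / p + 1 / q < 1)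
    (A : lp (fun _ : ι => 𝕂) (ENNReal.ofReal p) →L[𝕂]
      lp (fun _ : κ => 𝕂) (ENNReal.ofReal q) →L[𝕂] 𝕂)
    (hA : ∀ j k, ∃ r : ℝ, 0 ≤ r ∧
      A (lp.single (ENNReal.ofReal p) j 1) (lp.single (ENNReal.ofReal q) k 1) = (r : 𝕂)) :
    (∑' j,
        (∑' k,
            (ENNReal.ofReal (RCLike.re
              (A (lp.single (ENNReal.ofReal p) j 1)
                 (lp.single (ENNReal.ofReal q) k 1)))) ^ qstar)
          ^ ((1 / qstar) * (1 / (1 - (1 / p + 1 / q)))))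
      ^ (1 - (1 / p + 1 / q)) ≤ ENNReal.ofReal ‖A‖ := by
  choose a ha hAa using hA
  lift a to ι → κ → ℝ≥0 using ha
  set w := 1 - (1 / p + 1 / q) with hw_def
  have hp : 0 < p := one_pos.trans_le (ENNReal.one_le_ofReal.1 Fact.out)
  have hw : 0 < w := sub_pos.2 h
  have hexponents : p.HolderTriple (1 / w) qstar :=
    ⟨by rw [one_div, inv_inv, ← hqstar.one_sub_inv, hw_def]; ring, hp, one_div_pos.2 hw⟩
  have hmixed := tsum_rpow_tsum_rpow_le_of_forall_finsetLpNorm_le (a := a) hqstar.symm.pos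
    hexponents.symm.pos fun J K => finsetLpNorm_finsetLpNorm_le_of_forall_sum_mul_le hqstar
      hexponents (sum_sum_mul_mul_le_nnnorm_mul hAa J K)
  simp only [hAa, RCLike.ofReal_re, ENNReal.ofReal_coe_nnreal]
  have hnorm : ENNReal.ofReal ‖A‖ = ‖A‖₊ := ofReal_norm A
  rwa [← ENNReal.le_rpow_inv_iff hw, ← one_div, hnorm]

/-- **Hardy–Littlewood's Theorem 5 (1934).**
Let `p, q ∈ (1, ∞)` with `1/p + 1/q < 1` and let `q*` be the conjugate exponent
of `q`.  Then every bounded nonnegative bilinear form `A : ℓ_p × ℓ_q → 𝕂`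
satisfies
`(Σ_{j₁} (Σ_{j₂} A(e_{j₁},e_{j₂})^{q*})^{(1/q*)·(1/(1−(1/p+1/q)))})^{1−(1/p+1/q)} ≤ ‖A‖`. -/
theorem hardy_littlewood_bilinear
    (𝕂 : Type*) [RCLike 𝕂]
    (p q : ℝ) (hp : 1 < p) (hq : 1 < q)
    [Fact (1 ≤ ENNReal.ofReal p)] [Fact (1 ≤ ENNReal.ofReal q)]
    (h : 1 / p + 1 / q < 1)
    (qstar : ℝ) (hqstar : 1 / q + 1 / qstar = 1)
    (A : lp (fun _ : ℕ => 𝕂) (ENNReal.ofReal p) →L[𝕂]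
         lp (fun _ : ℕ => 𝕂) (ENNReal.ofReal q) →L[𝕂] 𝕂)
    (hA : ∀ j₁ j₂ : ℕ, ∃ r : ℝ, 0 ≤ r ∧
      A (lp.single (ENNReal.ofReal p) j₁ 1) (lp.single (ENNReal.ofReal q) j₂ 1) = (r : 𝕂)) :
    (∑' j₁ : ℕ,
        (∑' j₂ : ℕ,
            (ENNReal.ofReal (RCLike.re
              (A (lp.single (ENNReal.ofReal p) j₁ 1)
                 (lp.single (ENNReal.ofReal q) j₂ 1)))) ^ qstar)
          ^ ((1 / qstar) * (1 / (1 - (1 / p + 1 / q)))))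
      ^ (1 - (1 / p + 1 / q)) ≤ ENNReal.ofReal ‖A‖ := by
  exact hardy_littlewood_bilinear_general
    (Real.holderConjugate_iff.2 ⟨hq, by simpa only [one_div] using hqstar⟩) h A hA
end

section
/- Let p, q ∈ (1, ∞) satisfy 1/p + 1/q < 1 and let q₁, q₂ ∈ (0, ∞). Suppose that ( Σ_{j₁=1}^∞ ( Σ_{j₂=1}^∞ A(e_{j₁}, e_{j₂})^{q₂} )^{q₁/q₂} )^{1/q₁} ≤ ‖A‖ holds for every bounded nonnegative bilinear form A : ℓ_p × ℓ_q → 𝕂. Then q₁ ≥ 1/(1 − (1/p + 1/q)) and q₂ ≥ q*. -/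
open scoped ENNReal

/-!
Both exponents are forced by forms with coefficients `0` and `1`. For a set `s` of `n` indices, the
diagonal form `∑_{i ∈ s} x_i y_i` has mixed coefficient norm `n ^ (1 / q₁)` and, by Hölder's
inequality, operator norm at most `n ^ (1 - 1 / p - 1 / q)`; the one-row form
`x_{i₀} ∑_{j ∈ s} y_j` has mixed coefficient norm `n ^ (1 / q₂)` and operator norm at most
`n ^ (1 - 1 / q)`. Letting `n → ∞` compares the exponents, whatever the constant in the inequality.
-/

open Filter Finset
open scoped NNReal Topology

namespace HardyLittlewood

theorem le_of_forall_natCast_rpow_le {a b : ℝ} {C : ℝ≥0}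
    (h : ∀ n : ℕ, 0 < n → (n : ℝ≥0∞) ^ a ≤ C * (n : ℝ≥0∞) ^ b) : a ≤ b := by
  by_contra! hba
  have ratio_le : ∀ᶠ n : ℕ in atTop, (n : ℝ≥0∞) ^ (a - b) ≤ C := by
    filter_upwards [eventually_gt_atTop 0] with n hn
    have hn' : (n : ℝ≥0∞) ≠ 0 := by exact_mod_cast hn.ne'
    rw [ENNReal.rpow_sub a b hn' (ENNReal.natCast_ne_top n)]
    exact ENNReal.div_le_of_le_mul (h n hn)
  have ratio_tendsto : Tendsto (fun n : ℕ => (n : ℝ≥0∞) ^ (a - b)) atTop (𝓝 ∞) :=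
    (ENNReal.tendsto_rpow_at_top (sub_pos.2 hba)).comp ENNReal.tendsto_nat_nhds_top
  exact ENNReal.coe_ne_top (top_le_iff.1 (le_of_tendsto ratio_tendsto ratio_le))

theorem inv_ofReal_add_inv_ofReal {a b : ℝ} (ha : 0 < a) (hb : 0 < b) :
    (ENNReal.ofReal a)⁻¹ + (ENNReal.ofReal b)⁻¹ = ENNReal.ofReal (1 / a + 1 / b) := by
  rw [ENNReal.ofReal_add (by positivity) (by positivity), one_div, one_div,
    ENNReal.ofReal_inv_of_pos ha, ENNReal.ofReal_inv_of_pos hb]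

section MixedNorm

/-- The mixed `ℓ_{q₁}(ℓ_{q₂})` norm (a quasi-norm if an exponent is below `1`) of a matrix, the
inner sum running along rows. It takes values in `ℝ≥0∞`, so divergent sums are `∞`. -/
noncomputable def mixedNorm {ι κ : Type*} (q₁ q₂ : ℝ) (a : ι → κ → ℝ≥0∞) : ℝ≥0∞ :=
  (∑' i, (∑' j, a i j ^ q₂) ^ (q₁ / q₂)) ^ (1 / q₁)

variable {ι κ : Type*} [DecidableEq ι] [DecidableEq κ] {q q₁ q₂ : ℝ}

theorem tsum_indicator_rpow (hq : 0 < q) (s : Finset ι) :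
    ∑' i, (if i ∈ s then 1 else 0 : ℝ≥0∞) ^ q = #s := by
  rw [tsum_eq_sum (s := s) fun i hi => by simp [hi, hq]]
  simp +contextual

theorem mixedNorm_diagonal (hq₁ : 0 < q₁) (hq₂ : 0 < q₂) (s : Finset ι) :
    mixedNorm q₁ q₂ (fun i j : ι => if i = j ∧ i ∈ s then 1 else 0) = (#s : ℝ≥0∞) ^ (1 / q₁) := by
  have row_sum (i : ι) :
      ∑' j, (if i = j ∧ i ∈ s then 1 else 0 : ℝ≥0∞) ^ q₂ = if i ∈ s then 1 else 0 := by
    rw [tsum_eq_single i fun j hj => by simp [hj.symm, hq₂]]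
    split_ifs <;> simp_all
  simp only [mixedNorm, row_sum, tsum_indicator_rpow (div_pos hq₁ hq₂)]

theorem mixedNorm_row (hq₁ : 0 < q₁) (hq₂ : 0 < q₂) (i₀ : ι) (s : Finset κ) :
    mixedNorm q₁ q₂ (fun i j => if i = i₀ ∧ j ∈ s then 1 else 0) = (#s : ℝ≥0∞) ^ (1 / q₂) := by
  have other_rows (i : ι) (hi : i ≠ i₀) :
      (∑' j, (if i = i₀ ∧ j ∈ s then 1 else 0 : ℝ≥0∞) ^ q₂) ^ (q₁ / q₂) = 0 := by
    simp [hi, hq₂, div_pos hq₁ hq₂]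
  rw [mixedNorm, tsum_eq_single i₀ other_rows]
  simp only [true_and, tsum_indicator_rpow hq₂]
  rw [← ENNReal.rpow_mul, div_mul_div_comm, mul_one, mul_comm q₂, div_mul_cancel_left₀ hq₁.ne',
    one_div]

end MixedNorm

section ExtremalForms

variable {ι κ 𝕂 : Type*} [RCLike 𝕂] {p q r : ℝ≥0∞}

theorem sum_norm_le_card_rpow_mul_norm {E : ι → Type*} [∀ i, NormedAddCommGroup (E i)]
    [Fact (1 ≤ r)] (s : Finset ι) (f : lp E r) :
    ∑ i ∈ s, ‖f i‖ ≤ (#s : ℝ) ^ (1 - r⁻¹.toReal) * ‖f‖ := by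
  rcases r.dichotomy with rfl | one_le
  · simpa using Finset.sum_le_card_nsmul s _ _ fun i _ =>
      lp.norm_apply_le_norm ENNReal.top_ne_zero f i
  · have r_pos : 0 < r.toReal := zero_lt_one.trans_le one_le
    calc
      ∑ i ∈ s, ‖f i‖
          ≤ (#s : ℝ) ^ (1 - r.toReal⁻¹) * (∑ i ∈ s, ‖f i‖ ^ r.toReal) ^ r.toReal⁻¹ := by
        simpa using Real.inner_le_weight_mul_Lp_of_nonneg s one_le 1 (fun i => ‖f i‖)
          (fun _ => zero_le_one) fun _ => norm_nonneg _
      _ ≤ (#s : ℝ) ^ (1 - r.toReal⁻¹) * (‖f‖ ^ r.toReal) ^ r.toReal⁻¹ := by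
        gcongr
        exact lp.sum_rpow_le_norm_rpow r_pos f s
      _ = (#s : ℝ) ^ (1 - r⁻¹.toReal) * ‖f‖ := by
        rw [Real.rpow_rpow_inv (norm_nonneg f) r_pos.ne', ENNReal.toReal_inv]

/-- The functional `f ↦ ∑ i ∈ s, f i` on `ℓ_r`, through which the norms of the extremal forms
below are estimated. -/
noncomputable def sumCLM (𝕂 : Type*) [RCLike 𝕂] (r : ℝ≥0∞) [Fact (1 ≤ r)] (s : Finset ι) :
    lp (fun _ : ι => 𝕂) r →L[𝕂] 𝕂 :=
  ∑ i ∈ s, lp.evalCLM 𝕂 _ r i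

@[simp]
theorem sumCLM_apply [Fact (1 ≤ r)] (s : Finset ι) (f : lp (fun _ : ι => 𝕂) r) :
    sumCLM 𝕂 r s f = ∑ i ∈ s, f i := by
  simp only [sumCLM, _root_.sum_apply]
  rfl

theorem norm_sumCLM_le [Fact (1 ≤ r)] (s : Finset ι) :
    ‖sumCLM 𝕂 r s‖ ≤ (#s : ℝ) ^ (1 - r⁻¹.toReal) :=
  ContinuousLinearMap.opNorm_le_bound _ (by positivity) fun f => by
    rw [sumCLM_apply]
    exact (norm_sum_le _ _).trans (sum_norm_le_card_rpow_mul_norm s f)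

variable [Fact (1 ≤ p)] [Fact (1 ≤ q)]

/-- The bilinear form `(x, y) ↦ ∑ i ∈ s, x i * y i` on `ℓ_p × ℓ_q`, extremal for the outer exponent
`q₁`. -/
noncomputable def diagonalForm (𝕂 : Type*) [RCLike 𝕂] (p q : ℝ≥0∞) [Fact (1 ≤ p)] [Fact (1 ≤ q)]
    (s : Finset ι) :
    lp (fun _ : ι => 𝕂) p →L[𝕂] lp (fun _ : ι => 𝕂) q →L[𝕂] 𝕂 :=
  ∑ i ∈ s, (lp.evalCLM 𝕂 _ p i).smulRight (lp.evalCLM 𝕂 _ q i)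

theorem diagonalForm_apply (s : Finset ι) (x : lp (fun _ : ι => 𝕂) p) (y : lp (fun _ : ι => 𝕂) q) :
    diagonalForm 𝕂 p q s x y = ∑ i ∈ s, x i * y i := by
  simp only [diagonalForm, _root_.sum_apply]
  rfl

theorem norm_diagonalForm_le [p.HolderTriple q r] [Fact (1 ≤ r)] (s : Finset ι) :
    ‖diagonalForm 𝕂 p q s‖ ≤ (#s : ℝ) ^ (1 - r⁻¹.toReal) := by
  have norm_mul_le_one (_ : ι) : ‖ContinuousLinearMap.mul 𝕂 𝕂‖ ≤ (1 : ℝ≥0) :=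
    ContinuousLinearMap.opNorm_mul_le 𝕂 𝕂
  let mulL : lp (fun _ : ι => 𝕂) p →L[𝕂] lp (fun _ : ι => 𝕂) q →L[𝕂] lp (fun _ : ι => 𝕂) r :=
    lp.holderL r (fun _ => .mul 𝕂 𝕂) norm_mul_le_one
  have norm_mulL_le : ‖mulL‖ ≤ 1 := lp.norm_holderL_le r _ norm_mul_le_one
  refine ContinuousLinearMap.opNorm_le_bound₂ _ (by positivity) fun x y => ?_
  have norm_mulL_apply_le : ‖mulL x y‖ ≤ ‖x‖ * ‖y‖ := by
    simpa only [one_mul] using mulL.le_of_opNorm₂_le_of_le norm_mulL_le le_rfl le_rfl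
  calc
    ‖diagonalForm 𝕂 p q s x y‖ = ‖sumCLM 𝕂 r s (mulL x y)‖ := by
      rw [diagonalForm_apply, sumCLM_apply]
      rfl
    _ ≤ (#s : ℝ) ^ (1 - r⁻¹.toReal) * (‖x‖ * ‖y‖) :=
      (sumCLM 𝕂 r s).le_of_opNorm_le_of_le (norm_sumCLM_le s) norm_mulL_apply_le
    _ = (#s : ℝ) ^ (1 - r⁻¹.toReal) * ‖x‖ * ‖y‖ := (mul_assoc _ _ _).symm

/-- The bilinear form `(x, y) ↦ x i₀ * ∑ j ∈ s, y j` on `ℓ_p × ℓ_q`, extremal for the inner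
exponent `q₂`. -/
noncomputable def rowForm (𝕂 : Type*) [RCLike 𝕂] (p q : ℝ≥0∞) [Fact (1 ≤ p)] [Fact (1 ≤ q)]
    (i₀ : ι) (s : Finset κ) :
    lp (fun _ : ι => 𝕂) p →L[𝕂] lp (fun _ : κ => 𝕂) q →L[𝕂] 𝕂 :=
  (lp.evalCLM 𝕂 _ p i₀).smulRight (sumCLM 𝕂 q s)

theorem rowForm_apply (i₀ : ι) (s : Finset κ) (x : lp (fun _ : ι => 𝕂) p)
    (y : lp (fun _ : κ => 𝕂) q) : rowForm 𝕂 p q i₀ s x y = x i₀ * ∑ j ∈ s, y j := by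
  rw [← sumCLM_apply]
  rfl

theorem norm_rowForm_le (i₀ : ι) (s : Finset κ) :
    ‖rowForm 𝕂 p q i₀ s‖ ≤ (#s : ℝ) ^ (1 - q⁻¹.toReal) := by
  have norm_eval_le : ‖lp.evalCLM 𝕂 (fun _ : ι => 𝕂) p i₀‖ ≤ 1 :=
    LinearMap.mkContinuous_norm_le _ zero_le_one _
  rw [rowForm, ContinuousLinearMap.norm_smulRight_apply]
  exact (mul_le_of_le_one_left (norm_nonneg _) norm_eval_le).trans (norm_sumCLM_le s)

variable [DecidableEq ι] [DecidableEq κ]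

theorem diagonalForm_single (s : Finset ι) (i j : ι) :
    diagonalForm 𝕂 p q s (lp.single p i 1) (lp.single q j 1) =
      if i = j ∧ i ∈ s then 1 else 0 := by
  simp only [diagonalForm_apply, lp.single_apply, Pi.single_apply, mul_ite, mul_one, mul_zero]
  rcases eq_or_ne i j with rfl | hij
  · simp
  · simp [hij, hij.symm]

theorem rowForm_single (i₀ i : ι) (s : Finset κ) (j : κ) :
    rowForm 𝕂 p q i₀ s (lp.single p i 1) (lp.single q j 1) =
      if i = i₀ ∧ j ∈ s then 1 else 0 := by
  simp [rowForm_apply, lp.single_apply, Pi.single_apply, ← ite_and, and_comm, eq_comm]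

end ExtremalForms

section Inequality

variable {ι κ 𝕂 : Type*} [DecidableEq ι] [DecidableEq κ] [RCLike 𝕂] {p q r : ℝ≥0∞}
  [Fact (1 ≤ p)] [Fact (1 ≤ q)] {q₁ q₂ : ℝ} {C : ℝ≥0}

/-- The Hardy–Littlewood inequality with constant `C`: the mixed `(q₁, q₂)` norm of the coefficients
of every bounded nonnegative bilinear form on `ℓ_p × ℓ_q` is at most `C` times its operator norm.
A coefficient of a nonnegative form is the image in `𝕂` of a real number `≥ 0`, recovered by
`RCLike.re`. -/
def MixedNormInequality (ι κ 𝕂 : Type*) [DecidableEq ι] [DecidableEq κ] [RCLike 𝕂] (p q : ℝ≥0∞)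
    [Fact (1 ≤ p)] [Fact (1 ≤ q)] (q₁ q₂ : ℝ) (C : ℝ≥0) : Prop :=
  ∀ A : lp (fun _ : ι => 𝕂) p →L[𝕂] lp (fun _ : κ => 𝕂) q →L[𝕂] 𝕂,
    (∀ i j, ∃ r : ℝ, 0 ≤ r ∧ A (lp.single p i 1) (lp.single q j 1) = (r : 𝕂)) →
      mixedNorm q₁ q₂ (fun i j => ENNReal.ofReal
        (RCLike.re (A (lp.single p i 1) (lp.single q j 1)))) ≤ C * ENNReal.ofReal ‖A‖

namespace MixedNormInequality

theorem mixedNorm_indicator_le (H : MixedNormInequality ι κ 𝕂 p q q₁ q₂ C) (P : ι → κ → Prop)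
    [∀ i j, Decidable (P i j)]
    {A : lp (fun _ : ι => 𝕂) p →L[𝕂] lp (fun _ : κ => 𝕂) q →L[𝕂] 𝕂}
    (hA : ∀ i j, A (lp.single p i 1) (lp.single q j 1) = if P i j then 1 else 0) {M : ℝ}
    (hM : ‖A‖ ≤ M) :
    mixedNorm q₁ q₂ (fun i j => if P i j then 1 else 0) ≤ C * ENNReal.ofReal M := by
  have nonneg (i : ι) (j : κ) :
      ∃ r : ℝ, 0 ≤ r ∧ A (lp.single p i 1) (lp.single q j 1) = (r : 𝕂) :=
    ⟨if P i j then 1 else 0, by split_ifs <;> simp, by rw [hA]; split_ifs <;> simp⟩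
  have coeff (i : ι) (j : κ) :
      ENNReal.ofReal (RCLike.re (A (lp.single p i 1) (lp.single q j 1))) =
        if P i j then 1 else 0 := by
    rw [hA]
    split_ifs <;> simp
  simpa only [coeff] using (H A nonneg).trans (by gcongr)

theorem one_div_outer_exponent_le [Infinite ι] [p.HolderTriple q r] [Fact (1 ≤ r)] (hq₁ : 0 < q₁)
    (hq₂ : 0 < q₂) (H : MixedNormInequality ι ι 𝕂 p q q₁ q₂ C) : 1 / q₁ ≤ 1 - r⁻¹.toReal := by
  refine le_of_forall_natCast_rpow_le (C := C) fun n hn => ?_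
  obtain ⟨s, rfl⟩ := Infinite.exists_subset_card_eq ι n
  have key := H.mixedNorm_indicator_le _ (diagonalForm_single s) (norm_diagonalForm_le (r := r) s)
  rwa [mixedNorm_diagonal hq₁ hq₂, ← ENNReal.ofReal_rpow_of_pos (by exact_mod_cast hn),
    ENNReal.ofReal_natCast] at key

theorem one_div_inner_exponent_le [Nonempty ι] [Infinite κ] (hq₁ : 0 < q₁)
    (hq₂ : 0 < q₂) (H : MixedNormInequality ι κ 𝕂 p q q₁ q₂ C) : 1 / q₂ ≤ 1 - q⁻¹.toReal := by
  obtain ⟨i₀⟩ := ‹Nonempty ι›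
  refine le_of_forall_natCast_rpow_le (C := C) fun n hn => ?_
  obtain ⟨s, rfl⟩ := Infinite.exists_subset_card_eq κ n
  have key := H.mixedNorm_indicator_le _ (rowForm_single i₀ · s) (norm_rowForm_le i₀ s)
  rwa [mixedNorm_row hq₁ hq₂, ← ENNReal.ofReal_rpow_of_pos (by exact_mod_cast hn),
    ENNReal.ofReal_natCast] at key

end MixedNormInequality

end Inequality

end HardyLittlewood

open HardyLittlewood

theorem hardy_littlewood_bilinear_optimality_general {ι 𝕂 : Type*} [DecidableEq ι] [Infinite ι]
    [RCLike 𝕂] {p q : ℝ≥0∞} [Fact (1 ≤ p)] [Fact (1 ≤ q)] (h : p⁻¹ + q⁻¹ < 1)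
    {q₁ q₂ : ℝ} (hq₁ : 0 < q₁) (hq₂ : 0 < q₂) {C : ℝ≥0}
    (H : MixedNormInequality ι ι 𝕂 p q q₁ q₂ C) :
    1 / (1 - (p⁻¹ + q⁻¹).toReal) ≤ q₁ ∧ 1 / (1 - q⁻¹.toReal) ≤ q₂ := by
  let r := (p⁻¹ + q⁻¹)⁻¹
  have : p.HolderTriple q r := ⟨(inv_inv _).symm⟩
  have : Fact (1 ≤ r) := ⟨ENNReal.one_le_inv.2 h.le⟩
  have outer := H.one_div_outer_exponent_le (r := r) hq₁ hq₂
  have inner := H.one_div_inner_exponent_le hq₁ hq₂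
  rw [inv_inv] at outer
  exact ⟨(one_div_le hq₁ ((one_div_pos.2 hq₁).trans_le outer)).1 outer,
    (one_div_le hq₂ ((one_div_pos.2 hq₂).trans_le inner)).1 inner⟩

/-- **Optimality of the exponents in Hardy–Littlewood's Theorem 5.**
Let `p, q ∈ (1, ∞)` with `1/p + 1/q < 1` and let `q₁, q₂ ∈ (0, ∞)`.  If
`(Σ_{j₁} (Σ_{j₂} A(e_{j₁},e_{j₂})^{q₂})^{q₁/q₂})^{1/q₁} ≤ ‖A‖` holds for every
bounded nonnegative bilinear form `A : ℓ_p × ℓ_q → 𝕂`, then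
`q₁ ≥ 1/(1 − (1/p + 1/q))` and `q₂ ≥ q*`, where `q*` is the conjugate exponent
of `q`. -/
theorem hardy_littlewood_bilinear_optimality
    (𝕂 : Type*) [RCLike 𝕂]
    (p q : ℝ) (hp : 1 < p) (hq : 1 < q)
    [Fact (1 ≤ ENNReal.ofReal p)] [Fact (1 ≤ ENNReal.ofReal q)]
    (h : 1 / p + 1 / q < 1)
    (qstar : ℝ) (hqstar : 1 / q + 1 / qstar = 1)
    (q₁ q₂ : ℝ) (hq₁ : 0 < q₁) (hq₂ : 0 < q₂)
    (H : ∀ A : lp (fun _ : ℕ => 𝕂) (ENNReal.ofReal p) →L[𝕂]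
          lp (fun _ : ℕ => 𝕂) (ENNReal.ofReal q) →L[𝕂] 𝕂,
      (∀ j₁ j₂ : ℕ, ∃ r : ℝ, 0 ≤ r ∧
        A (lp.single (ENNReal.ofReal p) j₁ 1) (lp.single (ENNReal.ofReal q) j₂ 1) = (r : 𝕂)) →
      (∑' j₁ : ℕ,
          (∑' j₂ : ℕ,
              (ENNReal.ofReal (RCLike.re
                (A (lp.single (ENNReal.ofReal p) j₁ 1)
                   (lp.single (ENNReal.ofReal q) j₂ 1)))) ^ q₂)
            ^ (q₁ / q₂))
        ^ (1 / q₁) ≤ ENNReal.ofReal ‖A‖) :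
    1 / (1 - (1 / p + 1 / q)) ≤ q₁ ∧ qstar ≤ q₂ := by
  have inequality : MixedNormInequality ℕ ℕ 𝕂 (.ofReal p) (.ofReal q) q₁ q₂ 1 := fun A hA => by
    simpa only [mixedNorm, ENNReal.coe_one, one_mul] using H A hA
  have inv_sum : (ENNReal.ofReal p)⁻¹ + (ENNReal.ofReal q)⁻¹ = .ofReal (1 / p + 1 / q) :=
    inv_ofReal_add_inv_ofReal (by positivity) (by positivity)
  have bounds := hardy_littlewood_bilinear_optimality_general
    (by rwa [inv_sum, ENNReal.ofReal_lt_one]) hq₁ hq₂ inequality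
  rwa [inv_sum, ENNReal.toReal_ofReal (by positivity), ENNReal.toReal_inv,
    ENNReal.toReal_ofReal (by positivity), ← one_div q, ← eq_sub_of_add_eq' hqstar,
    one_div_one_div] at bounds
end

section
/- Let m be a positive integer and p₁, …, p_m ∈ (1, ∞) with 1/p₁ + ⋯ + 1/p_m < 1, and let ρ ∈ (0, ∞) satisfy ρ ≥ 1/(1 − (1/p₁ + ⋯ + 1/p_m)). Then for every bounded nonnegative m-linear form A : ℓ_{p₁} × ⋯ × ℓ_{p_m} → 𝕂 one has ( Σ_{j₁,…,j_m=1}^∞ A(e_{j₁}, …, e_{j_m})^{ρ} )^{1/ρ} ≤ ‖A‖. -/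
open scoped ENNReal

/-!
Write `aⱼ = A(e_{j₁}, …, e_{j_m})` and `σ = ∑ 1/pᵢ`. A nonnegative weight `w` on a finite set `F` of
multi-indices has one-dimensional marginals `wᵢ`, each of the same total mass and each dominating
`w`. Test `A` on the vectors `xᵢ = ∑ₖ wᵢ(k)^{1/pᵢ} eₖ`: the norm of `xᵢ` is `(∑ w)^{1/pᵢ}`, and
every term in the expansion of `A(x₁, …, x_m)` is nonnegative, so
`∑_F aⱼ wⱼ^σ ≤ A(x₁, …, x_m) ≤ ‖A‖ (∑_F wⱼ)^σ`.
The choice `w = a^{1/(1-σ)}`, extremal in Hölder's inequality, gives the critical exponent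
`1/(1-σ)`; larger exponents follow because `ℓ^ρ` norms decrease in `ρ`.
-/

open scoped ComplexOrder

theorem tsum_rpow_le_rpow_tsum {α : Type*} (f : α → ℝ≥0∞) {q : ℝ} (hq : 1 ≤ q) :
    ∑' a, f a ^ q ≤ (∑' a, f a) ^ q := by
  have rpow_split (x : ℝ≥0∞) : x ^ q = x * x ^ (q - 1) := by
    conv_lhs => rw [← add_sub_cancel 1 q,
      ENNReal.rpow_add_of_nonneg 1 (q - 1) zero_le_one (sub_nonneg.2 hq), ENNReal.rpow_one]
  calc ∑' a, f a ^ q = ∑' a, f a * f a ^ (q - 1) := by simp_rw [rpow_split]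
    _ ≤ ∑' a, f a * (∑' b, f b) ^ (q - 1) := by
        gcongr with a
        exact ENNReal.le_tsum a
    _ = (∑' a, f a) ^ q := by rw [ENNReal.tsum_mul_right, ← rpow_split]

theorem antitoneOn_tsum_rpow_rpow_one_div {α : Type*} (f : α → ℝ≥0∞) :
    AntitoneOn (fun r : ℝ => (∑' a, f a ^ r) ^ (1 / r)) (Set.Ioi 0) := by
  intro r (hr : 0 < r) ρ (hρ : 0 < ρ) hrρ
  have hpow (a : α) : (f a ^ r) ^ (ρ / r) = f a ^ ρ := by
    rw [← ENNReal.rpow_mul, mul_div_cancel₀ ρ hr.ne']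
  calc (∑' a, f a ^ ρ) ^ (1 / ρ) = (∑' a, (f a ^ r) ^ (ρ / r)) ^ (1 / ρ) := by simp_rw [hpow]
    _ ≤ ((∑' a, f a ^ r) ^ (ρ / r)) ^ (1 / ρ) := by
        gcongr
        exact tsum_rpow_le_rpow_tsum _ ((one_le_div hr).2 hrρ)
    _ = (∑' a, f a ^ r) ^ (1 / r) := by
        rw [← ENNReal.rpow_mul]
        congr 1
        field_simp

theorem le_rpow_one_div_one_sub_of_le_mul_rpow {S C σ : ℝ} (hS : 0 ≤ S) (hC : 0 ≤ C) (hσ : σ < 1)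
    (h : S ≤ C * S ^ σ) : S ≤ C ^ (1 / (1 - σ)) := by
  rw [one_div, Real.le_rpow_inv_iff_of_pos hS hC (sub_pos.2 hσ)]
  rcases hS.eq_or_lt with rfl | hS
  · rwa [Real.zero_rpow (sub_pos.2 hσ).ne']
  · rwa [Real.rpow_sub hS, Real.rpow_one, div_le_iff₀ (Real.rpow_pos_of_pos hS σ)]

theorem toReal_inv_ofReal {x : ℝ} (hx : 0 ≤ x) : (ENNReal.ofReal x)⁻¹.toReal = 1 / x := by
  rw [ENNReal.toReal_inv, ENNReal.toReal_ofReal hx, one_div]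

theorem ofReal_re_eq_enorm {𝕂 : Type*} [RCLike 𝕂] {z : 𝕂} (hz : 0 ≤ z) :
    ENNReal.ofReal (RCLike.re z) = ‖z‖ₑ := by
  rw [← ofReal_norm, ← RCLike.norm_of_nonneg' hz, RCLike.ofReal_re, RCLike.norm_of_nonneg' hz]

section Marginals

variable {ι : Type*} {κ : ι → Type*} [∀ i, DecidableEq (κ i)]
  (F : Finset (∀ i, κ i)) (w : (∀ i, κ i) → ℝ)

/-- The `i`-th one-dimensional marginal of the weight `w` restricted to the finite set `F` of
multi-indices. -/
def marginal (i : ι) (k : κ i) : ℝ :=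
  ∑ j ∈ F with j i = k, w j

variable {F w}

theorem marginal_nonneg (hw : ∀ j, 0 ≤ w j) (i : ι) (k : κ i) : 0 ≤ marginal F w i k :=
  Finset.sum_nonneg fun j _ => hw j

theorem le_marginal (hw : ∀ j, 0 ≤ w j) {j : ∀ i, κ i} (hj : j ∈ F) (i : ι) :
    w j ≤ marginal F w i (j i) :=
  Finset.single_le_sum (fun j _ => hw j) (Finset.mem_filter.2 ⟨hj, rfl⟩)

variable (F w) in
theorem sum_marginal (i : ι) :
    ∑ k ∈ F.image (· i), marginal F w i k = ∑ j ∈ F, w j :=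
  Finset.sum_fiberwise_of_maps_to (fun _ => Finset.mem_image_of_mem _) w

theorem rpow_sum_le_prod_marginal_rpow [Fintype ι] (hw : ∀ j, 0 ≤ w j) {θ : ι → ℝ}
    (hθ : ∀ i, 0 ≤ θ i) {j : ∀ i, κ i} (hj : j ∈ F) :
    w j ^ ∑ i, θ i ≤ ∏ i, marginal F w i (j i) ^ θ i := by
  rw [Real.rpow_sum_of_nonneg (hw j) fun i _ => hθ i]
  exact Finset.prod_le_prod (fun i _ => Real.rpow_nonneg (hw j) _) fun i _ =>
    Real.rpow_le_rpow (hw j) (le_marginal hw hj i) (hθ i)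

end Marginals

theorem norm_sum_rpow_smul_single_le {𝕂 κ : Type*} [RCLike 𝕂] [DecidableEq κ]
    (p : ℝ≥0∞) [Fact (1 ≤ p)] (s : Finset κ) {c : κ → ℝ} (hc : ∀ k, 0 ≤ c k) :
    ‖∑ k ∈ s, ((c k ^ p⁻¹.toReal : ℝ) : 𝕂) • lp.single (E := fun _ => 𝕂) p k 1‖ ≤
      (∑ k ∈ s, c k) ^ p⁻¹.toReal := by
  simp_rw [← lp.single_smul, smul_eq_mul, mul_one]
  rcases eq_or_ne p ∞ with rfl | hp
  · simp only [ENNReal.inv_top, ENNReal.toReal_zero, Real.rpow_zero]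
    refine lp.norm_le_of_forall_le zero_le_one fun k => ?_
    simp only [lp.coeFn_sum, lp.coeFn_single, Finset.sum_apply, Finset.sum_pi_single]
    split_ifs <;> simp
  · have hp_pos : 0 < p.toReal := ENNReal.toReal_pos (zero_lt_one.trans_le Fact.out).ne' hp
    rw [ENNReal.toReal_inv, Real.le_rpow_inv_iff_of_pos (norm_nonneg _)
      (Finset.sum_nonneg fun k _ => hc k) hp_pos, lp.norm_sum_single hp_pos]
    refine (Finset.sum_congr rfl fun k _ => ?_).le
    rw [RCLike.norm_of_nonneg (Real.rpow_nonneg (hc k) _), Real.rpow_inv_rpow (hc k) hp_pos.ne']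

theorem multilinearMap_apply_sum_smul {R ι W : Type*} [CommSemiring R] [Fintype ι] [DecidableEq ι]
    {V : ι → Type*} [∀ i, AddCommMonoid (V i)] [∀ i, Module R (V i)] [AddCommMonoid W] [Module R W]
    {κ : ι → Type*} (A : MultilinearMap R V W) (s : ∀ i, Finset (κ i)) (c : ∀ i, κ i → R)
    (v : ∀ i, κ i → V i) :
    A (fun i => ∑ k ∈ s i, c i k • v i k) =
      ∑ j ∈ Fintype.piFinset s, (∏ i, c i (j i)) • A fun i => v i (j i) := by
  rw [A.map_sum_finset]
  simp_rw [A.map_smul_univ]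

section MultilinearForms

variable {𝕂 ι : Type*} [RCLike 𝕂] [Fintype ι]

theorem sum_prod_mul_norm_le_norm_apply {V : ι → Type*}
    [∀ i, AddCommMonoid (V i)] [∀ i, Module 𝕂 (V i)] {κ : ι → Type*} [∀ i, DecidableEq (κ i)]
    (A : MultilinearMap 𝕂 V 𝕂) {v : ∀ i, κ i → V i} (hA : ∀ j : ∀ i, κ i, 0 ≤ A fun i => v i (j i))
    (F : Finset (∀ i, κ i)) {c : ∀ i, κ i → ℝ} (hc : ∀ i k, 0 ≤ c i k) :
    ∑ j ∈ F, (∏ i, c i (j i)) * ‖A fun i => v i (j i)‖ ≤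
      ‖A fun i => ∑ k ∈ F.image (· i), (c i k : 𝕂) • v i k‖ := by
  classical
  have hterm (j : ∀ i, κ i) : 0 ≤ (∏ i, c i (j i)) * ‖A fun i => v i (j i)‖ :=
    mul_nonneg (Finset.prod_nonneg fun i _ => hc i _) (norm_nonneg _)
  have hF : F ⊆ Fintype.piFinset fun i => F.image (· i) := fun j hj =>
    Fintype.mem_piFinset.2 fun i => Finset.mem_image_of_mem _ hj
  calc ∑ j ∈ F, (∏ i, c i (j i)) * ‖A fun i => v i (j i)‖
      ≤ ∑ j ∈ Fintype.piFinset fun i => F.image (· i), (∏ i, c i (j i)) * ‖A fun i => v i (j i)‖ :=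
        Finset.sum_le_sum_of_subset_of_nonneg hF fun j _ _ => hterm j
    _ = ‖A fun i => ∑ k ∈ F.image (· i), (c i k : 𝕂) • v i k‖ := by
        rw [multilinearMap_apply_sum_smul, ← RCLike.norm_of_nonneg (K := 𝕂)
          (Finset.sum_nonneg fun j _ => hterm j)]
        push_cast
        simp_rw [RCLike.norm_of_nonneg' (hA _), smul_eq_mul]

variable {κ : ι → Type*} [∀ i, DecidableEq (κ i)] {p : ι → ℝ≥0∞} [∀ i, Fact (1 ≤ p i)]
  (A : ContinuousMultilinearMap 𝕂 (fun i => lp (fun _ : κ i => 𝕂) (p i)) 𝕂)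

theorem sum_norm_mul_rpow_le (hA : ∀ j : ∀ i, κ i, 0 ≤ A fun i => lp.single (p i) (j i) 1)
    (F : Finset (∀ i, κ i)) {w : (∀ i, κ i) → ℝ} (hw : ∀ j, 0 ≤ w j) :
    ∑ j ∈ F, ‖A fun i => lp.single (p i) (j i) 1‖ * w j ^ ∑ i, (p i)⁻¹.toReal ≤
      ‖A‖ * (∑ j ∈ F, w j) ^ ∑ i, (p i)⁻¹.toReal := by
  let c (i : ι) (k : κ i) : ℝ := marginal F w i k ^ (p i)⁻¹.toReal
  let x (i : ι) : lp (fun _ : κ i => 𝕂) (p i) :=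
    ∑ k ∈ F.image (· i), (c i k : 𝕂) • lp.single (p i) k 1
  have hθ (i : ι) : 0 ≤ (p i)⁻¹.toReal := ENNReal.toReal_nonneg
  have hc (i : ι) (k : κ i) : 0 ≤ c i k := Real.rpow_nonneg (marginal_nonneg hw i k) _
  have hx (i : ι) : ‖x i‖ ≤ (∑ j ∈ F, w j) ^ (p i)⁻¹.toReal := by
    rw [← sum_marginal F w i]
    exact norm_sum_rpow_smul_single_le (p i) _ (marginal_nonneg hw i)
  calc ∑ j ∈ F, ‖A fun i => lp.single (p i) (j i) 1‖ * w j ^ ∑ i, (p i)⁻¹.toReal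
      ≤ ∑ j ∈ F, (∏ i, c i (j i)) * ‖A fun i => lp.single (p i) (j i) 1‖ := by
        refine Finset.sum_le_sum fun j hj => ?_
        rw [mul_comm]
        gcongr
        exact rpow_sum_le_prod_marginal_rpow hw hθ hj
    _ ≤ ‖A x‖ :=
        sum_prod_mul_norm_le_norm_apply A.toMultilinearMap
          (v := fun i k => lp.single (p i) k 1) hA F hc
    _ ≤ ‖A‖ * ∏ i, (∑ j ∈ F, w j) ^ (p i)⁻¹.toReal := A.le_opNorm_mul_prod_of_le hx
    _ = ‖A‖ * (∑ j ∈ F, w j) ^ ∑ i, (p i)⁻¹.toReal := by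
        rw [Real.rpow_sum_of_nonneg (Finset.sum_nonneg fun j _ => hw j) fun i _ => hθ i]

theorem sum_norm_rpow_critical_le (hsum : ∑ i, (p i)⁻¹.toReal < 1)
    (hA : ∀ j : ∀ i, κ i, 0 ≤ A fun i => lp.single (p i) (j i) 1) (F : Finset (∀ i, κ i)) :
    ∑ j ∈ F, ‖A fun i => lp.single (p i) (j i) 1‖ ^ (1 / (1 - ∑ i, (p i)⁻¹.toReal)) ≤
      ‖A‖ ^ (1 / (1 - ∑ i, (p i)⁻¹.toReal)) := by
  set a : (∀ i, κ i) → ℝ := fun j => ‖A fun i => lp.single (p i) (j i) 1‖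
  set σ := ∑ i, (p i)⁻¹.toReal
  set r := 1 / (1 - σ) with hr
  have ha (j : ∀ i, κ i) : 0 ≤ a j := norm_nonneg _
  have hσ_nonneg : 0 ≤ σ := Finset.sum_nonneg fun i _ => ENNReal.toReal_nonneg
  have hr_pos : 0 < r := one_div_pos.2 (sub_pos.2 hsum)
  have hr_eq : r = 1 + r * σ := by
    have := (sub_pos.2 hsum).ne'
    rw [hr]
    field_simp
    ring
  have ha_rpow (j : ∀ i, κ i) : a j ^ r = a j * (a j ^ r) ^ σ := by
    conv_lhs => rw [hr_eq, Real.rpow_add_of_nonneg (ha j) zero_le_one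
      (mul_nonneg hr_pos.le hσ_nonneg), Real.rpow_one, Real.rpow_mul (ha j)]
  refine le_rpow_one_div_one_sub_of_le_mul_rpow
    (Finset.sum_nonneg fun j _ => Real.rpow_nonneg (ha j) r) (norm_nonneg A) hsum ?_
  calc ∑ j ∈ F, a j ^ r = ∑ j ∈ F, a j * (a j ^ r) ^ σ := Finset.sum_congr rfl fun j _ => ha_rpow j
    _ ≤ ‖A‖ * (∑ j ∈ F, a j ^ r) ^ σ :=
        sum_norm_mul_rpow_le A hA F fun j => Real.rpow_nonneg (ha j) r

theorem tsum_enorm_rpow_critical_le (hsum : ∑ i, (p i)⁻¹.toReal < 1)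
    (hA : ∀ j : ∀ i, κ i, 0 ≤ A fun i => lp.single (p i) (j i) 1) :
    ∑' j : ∀ i, κ i, ‖A fun i => lp.single (p i) (j i) 1‖ₑ ^ (1 / (1 - ∑ i, (p i)⁻¹.toReal)) ≤
      ‖A‖ₑ ^ (1 / (1 - ∑ i, (p i)⁻¹.toReal)) := by
  have hr_nonneg : 0 ≤ 1 / (1 - ∑ i, (p i)⁻¹.toReal) := (one_div_pos.2 (sub_pos.2 hsum)).le
  rw [ENNReal.tsum_eq_iSup_sum]
  refine iSup_le fun F => ?_
  simp_rw [← ofReal_norm, ENNReal.ofReal_rpow_of_nonneg (norm_nonneg _) hr_nonneg]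
  rw [← ENNReal.ofReal_sum_of_nonneg fun j _ => Real.rpow_nonneg (norm_nonneg _) _]
  exact ENNReal.ofReal_le_ofReal (sum_norm_rpow_critical_le A hsum hA F)

end MultilinearForms

theorem positive_hardy_littlewood_sufficiency_general {𝕂 ι : Type*} [RCLike 𝕂] [Fintype ι]
    {κ : ι → Type*} [∀ i, DecidableEq (κ i)] {p : ι → ℝ≥0∞} [∀ i, Fact (1 ≤ p i)]
    (hsum : ∑ i, (p i)⁻¹.toReal < 1) {ρ : ℝ} (hρ : 1 / (1 - ∑ i, (p i)⁻¹.toReal) ≤ ρ)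
    (A : ContinuousMultilinearMap 𝕂 (fun i => lp (fun _ : κ i => 𝕂) (p i)) 𝕂)
    (hA : ∀ j : ∀ i, κ i, 0 ≤ A fun i => lp.single (p i) (j i) 1) :
    (∑' j : ∀ i, κ i, ‖A fun i => lp.single (p i) (j i) 1‖ₑ ^ ρ) ^ (1 / ρ) ≤ ‖A‖ₑ := by
  set r := 1 / (1 - ∑ i, (p i)⁻¹.toReal)
  have hr_pos : 0 < r := one_div_pos.2 (sub_pos.2 hsum)
  calc (∑' j : ∀ i, κ i, ‖A fun i => lp.single (p i) (j i) 1‖ₑ ^ ρ) ^ (1 / ρ)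
      ≤ (∑' j : ∀ i, κ i, ‖A fun i => lp.single (p i) (j i) 1‖ₑ ^ r) ^ (1 / r) :=
        antitoneOn_tsum_rpow_rpow_one_div _ hr_pos (hr_pos.trans_le hρ) hρ
    _ ≤ ‖A‖ₑ := by
        rw [one_div, ENNReal.rpow_inv_le_iff hr_pos]
        exact tsum_enorm_rpow_critical_le A hsum hA

/-- **Bayart's Hardy–Littlewood inequality for positive multilinear forms
(sufficiency of the exponent).**
Let `m ≥ 1`, `p₁, …, p_m ∈ (1, ∞)` with `1/p₁ + ⋯ + 1/p_m < 1`, and let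
`ρ ∈ (0, ∞)` satisfy `ρ ≥ 1/(1 − (1/p₁ + ⋯ + 1/p_m))`.  Then every bounded
nonnegative `m`-linear form `A : ℓ_{p₁} × ⋯ × ℓ_{p_m} → 𝕂` satisfies
`(Σ_{j₁,…,j_m} A(e_{j₁},…,e_{j_m})^ρ)^{1/ρ} ≤ ‖A‖`. -/
theorem positive_hardy_littlewood_sufficiency
    (𝕂 : Type*) [RCLike 𝕂] (m : ℕ) (hm : 0 < m)
    (p : Fin m → ℝ) (hp : ∀ i, 1 < p i)
    [∀ i, Fact (1 ≤ ENNReal.ofReal (p i))]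
    (hsum : ∑ i, 1 / p i < 1)
    (ρ : ℝ) (hρ : 0 < ρ) (hρ' : 1 / (1 - ∑ i, 1 / p i) ≤ ρ)
    (A : ContinuousMultilinearMap 𝕂
      (fun i : Fin m => lp (fun _ : ℕ => 𝕂) (ENNReal.ofReal (p i))) 𝕂)
    (hA : ∀ j : Fin m → ℕ, ∃ r : ℝ, 0 ≤ r ∧
      A (fun i => lp.single (ENNReal.ofReal (p i)) (j i) 1) = (r : 𝕂)) :
    (∑' j : Fin m → ℕ,
        (ENNReal.ofReal
          (RCLike.re (A (fun i => lp.single (ENNReal.ofReal (p i)) (j i) 1)))) ^ ρ)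
      ^ (1 / ρ) ≤ ENNReal.ofReal ‖A‖ := by
  have hA_nonneg (j : Fin m → ℕ) : 0 ≤ A fun i => lp.single (ENNReal.ofReal (p i)) (j i) 1 := by
    obtain ⟨r, hr, hAj⟩ := hA j
    exact hAj ▸ RCLike.ofReal_nonneg.2 hr
  simp_rw [← toReal_inv_ofReal (zero_lt_one.trans (hp _)).le] at hsum hρ'
  simpa only [ofReal_re_eq_enorm (hA_nonneg _), ofReal_norm] using
    positive_hardy_littlewood_sufficiency_general hsum hρ' A hA_nonneg
end

section
/- Let m be a positive integer and p₁, …, p_m ∈ (1, ∞) with 1/p₁ + ⋯ + 1/p_m < 1, and let ρ ∈ (0, ∞). Suppose that ( Σ_{j₁,…,j_m=1}^∞ A(e_{j₁}, …, e_{j_m})^{ρ} )^{1/ρ} ≤ ‖A‖ holds for every bounded nonnegative m-linear form A : ℓ_{p₁} × ⋯ × ℓ_{p_m} → 𝕂. Then ρ ≥ 1/(1 − (1/p₁ + ⋯ + 1/p_m)). -/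
open scoped ENNReal

/-!
The diagonal form `A x = ∑ k ∈ s, ∏ i, x i k` takes the value `1` at `(e_k, …, e_k)` for the
`n = #s` indices `k ∈ s`, so the left-hand side of the inequality is at least `n ^ (1 / ρ)`.
By Hölder's inequality with the constant `1` as an additional factor, `‖A‖ ≤ n ^ (1 - ∑ i, 1 / p i)`
when `∑ i, 1 / p i ≤ 1`, and letting `n → ∞` gives `1 / ρ ≤ 1 - ∑ i, 1 / p i`, whatever the constant
in the inequality. If `∑ i, 1 / p i > 1`, the same argument with the weights `1 / p i` decreased
until they add up to `1` shows that no such inequality holds.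
-/

open scoped NNReal Finset

open Filter

theorem sum_prod_rpow_le_card_rpow_mul_prod_sum_rpow {α ι : Type*} (s : Finset α) (t : Finset ι)
    (f : ι → α → ℝ≥0) {w : ι → ℝ} (hw : ∀ i ∈ t, 0 ≤ w i) (hw_sum : ∑ i ∈ t, w i ≤ 1) :
    ∑ k ∈ s, ∏ i ∈ t, f i k ^ w i
      ≤ (#s : ℝ≥0) ^ (1 - ∑ i ∈ t, w i) * ∏ i ∈ t, (∑ k ∈ s, f i k) ^ w i := by
  let _ : MeasurableSpace α := ⊤
  have holder := ENNReal.lintegral_mul_prod_norm_pow_le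
    (μ := MeasureTheory.Measure.count.restrict (s : Set α)) t
    (g := fun _ ↦ 1) (f := fun i k ↦ (f i k : ℝ≥0∞)) aemeasurable_const
    (fun _ _ ↦ measurable_from_top.aemeasurable) (1 - ∑ i ∈ t, w i) (sub_add_cancel _ _)
    (sub_nonneg.2 hw_sum) hw
  simp only [MeasureTheory.lintegral_finset, MeasureTheory.Measure.count_singleton, mul_one,
    ENNReal.one_rpow, one_mul, Finset.sum_const, nsmul_eq_mul] at holder
  have coe_prod_rpow (a : ι → ℝ≥0) :
      ((∏ i ∈ t, a i ^ w i : ℝ≥0) : ℝ≥0∞) = ∏ i ∈ t, (a i : ℝ≥0∞) ^ w i := by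
    rw [ENNReal.ofNNReal_finsetProd]
    exact Finset.prod_congr rfl fun i hi ↦ ENNReal.coe_rpow_of_nonneg _ (hw i hi)
  rw [← ENNReal.coe_le_coe]
  simpa only [ENNReal.ofNNReal_finsetSum, ENNReal.coe_mul, coe_prod_rpow, ENNReal.coe_natCast,
    ENNReal.coe_rpow_of_nonneg _ (sub_nonneg.2 hw_sum)] using holder

theorem le_of_forall_natCast_rpow_le_mul_rpow {a b : ℝ} {C : ℝ≥0}
    (h : ∀ n : ℕ, (n : ℝ≥0) ^ a ≤ C * (n : ℝ≥0) ^ b) : a ≤ b := by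
  by_contra! hba
  have unbounded : Tendsto (fun n : ℕ ↦ (n : ℝ≥0) ^ (a - b)) atTop atTop :=
    (NNReal.tendsto_rpow_atTop (sub_pos.2 hba)).comp tendsto_natCast_atTop_atTop
  obtain ⟨n, hCn, hn⟩ := ((unbounded.eventually_gt_atTop C).and (eventually_ge_atTop 1)).exists
  have hn0 : (n : ℝ≥0) ≠ 0 := by positivity
  refine (h n).not_gt ?_
  calc C * (n : ℝ≥0) ^ b < (n : ℝ≥0) ^ (a - b) * (n : ℝ≥0) ^ b := by gcongr
    _ = (n : ℝ≥0) ^ a := by rw [← NNReal.rpow_add hn0, sub_add_cancel]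

section SequenceSpaces

variable {α : Type*} {E : α → Type*} [∀ k, NormedAddCommGroup (E k)]

theorem exists_sum_le_one_and_nnnorm_apply_le_mul_rpow {p : ℝ≥0∞} [hp : Fact (1 ≤ p)]
    (x : lp E p) (s : Finset α) {w : ℝ} (hw : 0 ≤ w) (hwp : w ≤ p⁻¹.toReal) :
    ∃ g : α → ℝ≥0, ∑ k ∈ s, g k ≤ 1 ∧ ∀ k, ‖x k‖₊ ≤ ‖x‖₊ * g k ^ w := by
  have hp0 : p ≠ 0 := (zero_lt_one.trans_le hp.out).ne'
  have apply_le (k : α) : ‖x k‖₊ ≤ ‖x‖₊ := lp.norm_apply_le_norm hp0 x k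
  rcases eq_or_ne p ∞ with rfl | hp_top
  · obtain rfl : w = 0 := le_antisymm (by simpa using hwp) hw
    -- `g = 0` is a valid choice because `0 ^ 0 = 1`.
    exact ⟨0, by simp, by simpa using apply_le⟩
  have hp_pos : 0 < p.toReal := ENNReal.toReal_pos hp0 hp_top
  have hpw : p.toReal * w ≤ 1 := by
    rwa [ENNReal.toReal_inv, ← one_div, le_div_iff₀' hp_pos] at hwp
  refine ⟨fun k ↦ (‖x k‖₊ / ‖x‖₊) ^ p.toReal, ?_, fun k ↦ ?_⟩
  · have sum_le : ∑ k ∈ s, ‖x k‖₊ ^ p.toReal ≤ ‖x‖₊ ^ p.toReal := by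
      rw [← NNReal.coe_le_coe]
      push_cast
      exact lp.sum_rpow_le_norm_rpow hp_pos x s
    simp only [NNReal.div_rpow, ← Finset.sum_div]
    exact div_le_one_of_le₀ sum_le zero_le
  · calc ‖x k‖₊ = ‖x‖₊ * (‖x k‖₊ / ‖x‖₊) :=
          (mul_div_cancel_of_imp' fun hx ↦ le_zero_iff.1 (hx ▸ apply_le k)).symm
      _ ≤ ‖x‖₊ * ((‖x k‖₊ / ‖x‖₊) ^ p.toReal) ^ w := by
          rw [← NNReal.rpow_mul]
          gcongr
          have ratio_le_one : ‖x k‖₊ / ‖x‖₊ ≤ 1 := div_le_one_of_le₀ (apply_le k) zero_le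
          exact Real.self_le_rpow_of_le_one NNReal.zero_le_coe ratio_le_one hpw

theorem sum_prod_nnnorm_apply_le {ι : Type*} [Fintype ι] {p : ι → ℝ≥0∞}
    [∀ i, Fact (1 ≤ p i)] (x : ∀ i, lp E (p i)) (s : Finset α) {w : ι → ℝ} (hw : ∀ i, 0 ≤ w i)
    (hwp : ∀ i, w i ≤ (p i)⁻¹.toReal) (hw_sum : ∑ i, w i ≤ 1) :
    ∑ k ∈ s, ∏ i, ‖x i k‖₊ ≤ (#s : ℝ≥0) ^ (1 - ∑ i, w i) * ∏ i, ‖x i‖₊ := by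
  choose g g_sum_le le_mul_g using fun i ↦
    exists_sum_le_one_and_nnnorm_apply_le_mul_rpow (x i) s (hw i) (hwp i)
  calc ∑ k ∈ s, ∏ i, ‖x i k‖₊
      ≤ ∑ k ∈ s, ∏ i, ‖x i‖₊ * g i k ^ w i := by
        gcongr with k _ i _
        exact le_mul_g i k
    _ = (∑ k ∈ s, ∏ i, g i k ^ w i) * ∏ i, ‖x i‖₊ := by
        simp only [Finset.prod_mul_distrib, ← Finset.mul_sum]
        rw [mul_comm]
    _ ≤ (#s : ℝ≥0) ^ (1 - ∑ i, w i) * (∏ i, (∑ k ∈ s, g i k) ^ w i) * ∏ i, ‖x i‖₊ := by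
        gcongr
        exact sum_prod_rpow_le_card_rpow_mul_prod_sum_rpow s _ g (fun i _ ↦ hw i) hw_sum
    _ ≤ (#s : ℝ≥0) ^ (1 - ∑ i, w i) * ∏ i, ‖x i‖₊ := by
        gcongr
        exact mul_le_of_le_one_right' <|
          Finset.prod_le_one' fun i _ ↦ NNReal.rpow_le_one (g_sum_le i) (hw i)

end SequenceSpaces

section DiagonalForm

variable (𝕂 : Type*) [RCLike 𝕂] {α ι : Type*} [Fintype ι] (p : ι → ℝ≥0∞) [∀ i, Fact (1 ≤ p i)]
  (s : Finset α)

/-- The diagonal multilinear form `x ↦ ∑ k ∈ s, ∏ i, x i k` on `∏ i, ℓ_{p i}`, where the sequences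
are indexed by an arbitrary type `α`. It is the extremal example for the exponent. -/
noncomputable def diagonalForm :
    ContinuousMultilinearMap 𝕂 (fun i ↦ lp (fun _ : α ↦ 𝕂) (p i)) 𝕂 :=
  ∑ k ∈ s, (ContinuousMultilinearMap.mkPiAlgebra 𝕂 ι 𝕂).compContinuousLinearMap
    fun i ↦ lp.evalCLM 𝕂 (fun _ ↦ 𝕂) (p i) k

variable {p}

theorem diagonalForm_apply (x : ∀ i, lp (fun _ : α ↦ 𝕂) (p i)) :
    diagonalForm 𝕂 p s x = ∑ k ∈ s, ∏ i, x i k := by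
  simp [diagonalForm, lp.evalCLM]

theorem nnnorm_diagonalForm_le {w : ι → ℝ} (hw : ∀ i, 0 ≤ w i)
    (hwp : ∀ i, w i ≤ (p i)⁻¹.toReal) (hw_sum : ∑ i, w i ≤ 1) :
    ‖diagonalForm 𝕂 p s‖₊ ≤ (#s : ℝ≥0) ^ (1 - ∑ i, w i) := by
  refine ContinuousMultilinearMap.opNNNorm_le_iff.2 fun x ↦ ?_
  rw [diagonalForm_apply]
  refine (nnnorm_sum_le _ _).trans ?_
  simp only [nnnorm_prod]
  exact sum_prod_nnnorm_apply_le x s hw hwp hw_sum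

variable [DecidableEq α]

theorem diagonalForm_single (j : ι → α) :
    diagonalForm 𝕂 p s (fun i ↦ lp.single (p i) (j i) 1) = #{k ∈ s | ∀ i, k = j i} := by
  simp [diagonalForm_apply, Pi.single_apply, Finset.prod_ite_zero]

theorem diagonalForm_single_const [Nonempty ι] {k : α} (hk : k ∈ s) :
    diagonalForm 𝕂 p s (fun i ↦ lp.single (p i) k 1) = 1 := by
  rw [diagonalForm_single 𝕂 s fun _ ↦ k]
  simp [Finset.filter_eq', hk]

theorem card_le_tsum_diagonalForm_rpow [Nonempty ι] (ρ : ℝ) :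
    (#s : ℝ≥0∞) ≤ ∑' j : ι → α, ENNReal.ofReal
      (RCLike.re (diagonalForm 𝕂 p s fun i ↦ lp.single (p i) (j i) 1)) ^ ρ := by
  let diagonal : α ↪ (ι → α) := ⟨Function.const ι, Function.const_injective⟩
  calc (#s : ℝ≥0∞)
      = ∑ j ∈ s.map diagonal, ENNReal.ofReal
          (RCLike.re (diagonalForm 𝕂 p s fun i ↦ lp.single (p i) (j i) 1)) ^ ρ := by
        rw [Finset.sum_map, Finset.cast_card]
        refine Finset.sum_congr rfl fun k hk ↦ ?_
        simp [diagonal, diagonalForm_single_const 𝕂 s hk]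
    _ ≤ _ := ENNReal.sum_le_tsum _

end DiagonalForm

section Necessity

variable {𝕂 : Type*} [RCLike 𝕂] {α ι : Type*} [DecidableEq α] [Fintype ι]
  {p : ι → ℝ≥0∞} [∀ i, Fact (1 ≤ p i)] {ρ : ℝ} {C : ℝ≥0}

variable (𝕂 α p ρ C) in
/-- The Hardy–Littlewood inequality with exponent `ρ` and constant `C` for all bounded nonnegative
multilinear forms on `∏ i, ℓ_{p i}`, with sequences indexed by `α`. The left-hand side is computed
in `ℝ≥0∞`, so that the inequality includes the convergence of the series. -/
def PositiveHardyLittlewood : Prop :=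
  ∀ A : ContinuousMultilinearMap 𝕂 (fun i ↦ lp (fun _ : α ↦ 𝕂) (p i)) 𝕂,
    (∀ j : ι → α, ∃ r : ℝ, 0 ≤ r ∧ A (fun i ↦ lp.single (p i) (j i) 1) = (r : 𝕂)) →
    (∑' j : ι → α, ENNReal.ofReal (RCLike.re (A fun i ↦ lp.single (p i) (j i) 1)) ^ ρ) ^ (1 / ρ)
      ≤ C * ENNReal.ofReal ‖A‖

variable [Nonempty ι]

theorem PositiveHardyLittlewood.card_rpow_le (H : PositiveHardyLittlewood 𝕂 α p ρ C) (hρ : 0 < ρ)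
    (s : Finset α) : (#s : ℝ≥0) ^ (1 / ρ) ≤ C * ‖diagonalForm 𝕂 p s‖₊ := by
  have bound := H (diagonalForm 𝕂 p s) fun j ↦
    ⟨#{k ∈ s | ∀ i, k = j i}, by positivity, by simp [diagonalForm_single]⟩
  rw [ofReal_norm, enorm_eq_nnnorm, ← ENNReal.coe_mul] at bound
  have lower : (#s : ℝ≥0∞) ^ (1 / ρ) ≤ _ :=
    ENNReal.rpow_le_rpow (card_le_tsum_diagonalForm_rpow 𝕂 s (p := p) ρ) (by positivity)
  rw [← ENNReal.coe_le_coe, ENNReal.coe_rpow_of_nonneg _ (by positivity), ENNReal.coe_natCast]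
  exact lower.trans bound

variable [Infinite α]

theorem PositiveHardyLittlewood.one_div_le_one_sub_sum (H : PositiveHardyLittlewood 𝕂 α p ρ C)
    (hρ : 0 < ρ) {w : ι → ℝ} (hw : ∀ i, 0 ≤ w i) (hwp : ∀ i, w i ≤ (p i)⁻¹.toReal)
    (hw_sum : ∑ i, w i ≤ 1) : 1 / ρ ≤ 1 - ∑ i, w i := by
  refine le_of_forall_natCast_rpow_le_mul_rpow (C := C) fun n ↦ ?_
  obtain ⟨s, rfl⟩ := Infinite.exists_subset_card_eq α n
  grw [H.card_rpow_le hρ s, nnnorm_diagonalForm_le 𝕂 s hw hwp hw_sum]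

theorem positive_hardy_littlewood_necessity_general (hρ : 0 < ρ)
    (H : PositiveHardyLittlewood 𝕂 α p ρ C) : ∑ i, (p i)⁻¹.toReal + 1 / ρ ≤ 1 := by
  set S := ∑ i, (p i)⁻¹.toReal
  have hS : S ≤ 1 := by
    by_contra! hS
    have sum_normalized : ∑ i, (p i)⁻¹.toReal / S = 1 := by
      rw [← Finset.sum_div, div_self (by positivity)]
    have := H.one_div_le_one_sub_sum hρ (w := fun i ↦ (p i)⁻¹.toReal / S)
      (fun _ ↦ by positivity) (fun _ ↦ div_le_self (by positivity) hS.le) sum_normalized.le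
    rw [sum_normalized, sub_self] at this
    exact this.not_gt (by positivity)
  linarith [H.one_div_le_one_sub_sum hρ (fun _ ↦ by positivity) (fun _ ↦ le_rfl) hS]

end Necessity

/-- **Bayart's Hardy–Littlewood inequality for positive multilinear forms
(necessity of the exponent).**
Let `m ≥ 1`, `p₁, …, p_m ∈ (1, ∞)` with `1/p₁ + ⋯ + 1/p_m < 1`, and let
`ρ ∈ (0, ∞)`.  If `(Σ_{j₁,…,j_m} A(e_{j₁},…,e_{j_m})^ρ)^{1/ρ} ≤ ‖A‖` holds for
every bounded nonnegative `m`-linear form `A : ℓ_{p₁} × ⋯ × ℓ_{p_m} → 𝕂`, then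
`ρ ≥ 1/(1 − (1/p₁ + ⋯ + 1/p_m))`. -/
theorem positive_hardy_littlewood_necessity
    (𝕂 : Type*) [RCLike 𝕂] (m : ℕ) (hm : 0 < m)
    (p : Fin m → ℝ) (hp : ∀ i, 1 < p i)
    [∀ i, Fact (1 ≤ ENNReal.ofReal (p i))]
    (hsum : ∑ i, 1 / p i < 1)
    (ρ : ℝ) (hρ : 0 < ρ)
    (H : ∀ A : ContinuousMultilinearMap 𝕂
        (fun i : Fin m => lp (fun _ : ℕ => 𝕂) (ENNReal.ofReal (p i))) 𝕂,
      (∀ j : Fin m → ℕ, ∃ r : ℝ, 0 ≤ r ∧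
        A (fun i => lp.single (ENNReal.ofReal (p i)) (j i) 1) = (r : 𝕂)) →
      (∑' j : Fin m → ℕ,
          (ENNReal.ofReal
            (RCLike.re (A (fun i => lp.single (ENNReal.ofReal (p i)) (j i) 1)))) ^ ρ)
        ^ (1 / ρ) ≤ ENNReal.ofReal ‖A‖) :
    1 / (1 - ∑ i, 1 / p i) ≤ ρ := by
  have : Nonempty (Fin m) := ⟨⟨0, hm⟩⟩
  have exponents := positive_hardy_littlewood_necessity_general (C := 1) hρ
    (by simpa only [PositiveHardyLittlewood, ENNReal.coe_one, one_mul] using H)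
  have toReal_inv (i : Fin m) : (ENNReal.ofReal (p i))⁻¹.toReal = 1 / p i := by
    rw [ENNReal.toReal_inv, ENNReal.toReal_ofReal (by linarith [hp i]), one_div]
  simp only [toReal_inv] at exponents
  exact (one_div_le hρ (sub_pos.2 hsum)).1 (le_sub_iff_add_le'.2 exponents)
end

section
/- Let m be a positive integer, p₁, …, p_m ∈ (1, ∞) with 1/p₁ + ⋯ + 1/p_m < 1, let σ be a bijection of {1, …, m}, and let q₁, …, q_m ∈ (0, ∞). Suppose that ( Σ_{j_{σ(1)}=1}^∞ ( Σ_{j_{σ(2)}=1}^∞ ⋯ ( Σ_{j_{σ(m)}=1}^∞ A(e_{j₁}, …, e_{j_m})^{q_m} )^{q_{m−1}/q_m} ⋯ )^{q₁/q₂} )^{1/q₁} ≤ ‖A‖ holds for every bounded nonnegative m-linear form A : ℓ_{p₁} × ⋯ × ℓ_{p_m} → 𝕂. Then q_k ≥ δ^{p_{σ(k)}, …, p_{σ(m)}} := 1/(1 − (1/p_{σ(k)} + ⋯ + 1/p_{σ(m)})) for every k = 1, …, m. -/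
open scoped ENNReal

noncomputable section

/-- The mixed (anisotropic) iterated `ℓ`-norm: for exponents `q 0, …, q (k-1)` and a
nonnegative function `f` of `k` natural indices,
`mixedNorm q f = (Σ_{j₀} (Σ_{j₁} ⋯ (Σ_{j_{k-1}} f(j)^{q_{k-1}})^{q_{k-2}/q_{k-1}} ⋯ )^{q₀/q₁})^{1/q₀}`,
the sums being taken innermost over the last index. -/
noncomputable def mixedNorm : {k : ℕ} → (Fin k → ℝ) → ((Fin k → ℕ) → ℝ≥0∞) → ℝ≥0∞
  | 0, _, f => f (fun i => i.elim0)
  | (_ + 1), q, f =>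
      (∑' j : ℕ, (mixedNorm (fun i => q i.succ) (fun t => f (Fin.cons j t))) ^ (q 0))
        ^ (1 / q 0)

/-!
Feed the hypothesis the form `A x = ∑_{j < n} ∏_{i ∈ S} x i j * ∏_{i ∉ S} x i 0`, where
`S = {σ k, …, σ m}`. Its coefficients are `1` at `n` multi-indices that agree in the outer summation
variables `j_{σ 1}, …, j_{σ (k - 1)}` and differ in `j_{σ k}`, so its mixed norm is at least
`n ^ (1 / q k)`, while Hölder's inequality with the remaining weight `θ = 1 - ∑_{i ∈ S} 1 / p i`
placed on the constant function gives `‖A‖ ≤ n ^ θ`. Letting `n → ∞` yields `1 / q k ≤ θ`.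
-/

open Filter
open scoped NNReal

lemma le_of_eventually_natCast_rpow_le_const_mul_rpow {a b C : ℝ}
    (h : ∀ᶠ n : ℕ in atTop, (n : ℝ) ^ a ≤ C * (n : ℝ) ^ b) : a ≤ b := by
  by_contra! hba
  have unbounded : Tendsto (fun n : ℕ => (n : ℝ) ^ (a - b)) atTop atTop :=
    (tendsto_rpow_atTop (sub_pos.2 hba)).comp tendsto_natCast_atTop_atTop
  obtain ⟨n, hn, hn_pos, hCn⟩ :=
    (h.and ((eventually_gt_atTop 0).and (unbounded.eventually_gt_atTop C))).exists
  have hn_pos' : (0 : ℝ) < n := Nat.cast_pos.2 hn_pos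
  rw [Real.rpow_sub hn_pos', lt_div_iff₀ (Real.rpow_pos_of_pos hn_pos' b)] at hCn
  exact hn.not_gt hCn

section MixedNorm

variable {m : ℕ}

lemma mixedNorm_cons_le_mixedNorm {q : Fin (m + 1) → ℝ} (hq : 0 < q 0)
    (f : (Fin (m + 1) → ℕ) → ℝ≥0∞) (j : ℕ) :
    mixedNorm (fun i => q i.succ) (fun t => f (Fin.cons j t)) ≤ mixedNorm q f := by
  rw [mixedNorm, one_div, ENNReal.le_rpow_inv_iff hq]
  exact ENNReal.le_tsum (f := fun j => mixedNorm (fun i => q i.succ)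
    (fun t => f (Fin.cons j t)) ^ q 0) j

lemma apply_le_mixedNorm {q : Fin m → ℝ} (hq : ∀ l, 0 < q l) (f : (Fin m → ℕ) → ℝ≥0∞)
    (t : Fin m → ℕ) : f t ≤ mixedNorm q f := by
  induction m with
  | zero => exact (congrArg f (Subsingleton.elim _ _)).le
  | succ m ih =>
    calc f t = f (Fin.cons (t 0) (Fin.tail t)) := by rw [Fin.cons_self_tail]
      _ ≤ mixedNorm (fun i => q i.succ) (fun s => f (Fin.cons (t 0) s)) :=
        ih (fun l => hq l.succ) (fun s => f (Fin.cons (t 0) s)) (Fin.tail t)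
      _ ≤ mixedNorm q f := mixedNorm_cons_le_mixedNorm (hq 0) f (t 0)

lemma rpow_sum_rpow_le_mixedNorm_of_injOn {ι : Type*} {q : Fin m → ℝ} (hq : ∀ l, 0 < q l)
    (f : (Fin m → ℕ) → ℝ≥0∞) (k : Fin m) (c : Fin m → ℕ) (s : Finset ι) (u : ι → Fin m → ℕ)
    (agree : ∀ i ∈ s, ∀ l < k, u i l = c l) (inj : Set.InjOn (fun i => u i k) s) :
    (∑ i ∈ s, f (u i) ^ q k) ^ (1 / q k) ≤ mixedNorm q f := by
  induction m with
  | zero => exact k.elim0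
  | succ m ih =>
    induction k using Fin.cases with
    | zero =>
      rw [mixedNorm]
      set g : ℕ → ℝ≥0∞ := fun j => mixedNorm (fun i => q i.succ) (fun t => f (Fin.cons j t))
      have apply_le (i : ι) : f (u i) ≤ g (u i 0) := by
        simpa only [Fin.cons_self_tail] using apply_le_mixedNorm (fun l => hq l.succ)
          (fun t => f (Fin.cons (u i 0) t)) (Fin.tail (u i))
      refine ENNReal.rpow_le_rpow ?_ (one_div_pos.2 (hq 0)).le
      calc ∑ i ∈ s, f (u i) ^ q 0
          ≤ ∑ i ∈ s, g (u i 0) ^ q 0 :=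
            Finset.sum_le_sum fun i _ => ENNReal.rpow_le_rpow (apply_le i) (hq 0).le
        _ = ∑ j ∈ s.image (fun i => u i 0), g j ^ q 0 :=
            (Finset.sum_image (f := fun j => g j ^ q 0) inj).symm
        _ ≤ ∑' j, g j ^ q 0 := ENNReal.sum_le_tsum _
    | succ k =>
      have cons_tail (i : ι) (hi : i ∈ s) : Fin.cons (c 0) (Fin.tail (u i)) = u i := by
        rw [← agree i hi 0 k.succ_pos, Fin.cons_self_tail]
      calc (∑ i ∈ s, f (u i) ^ q k.succ) ^ (1 / q k.succ)
          = (∑ i ∈ s, f (Fin.cons (c 0) (Fin.tail (u i))) ^ q k.succ) ^ (1 / q k.succ) := by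
            congr 1
            exact Finset.sum_congr rfl fun i hi => by rw [cons_tail i hi]
        _ ≤ mixedNorm (fun i => q i.succ) (fun t => f (Fin.cons (c 0) t)) :=
            ih (fun l => hq l.succ) (fun t => f (Fin.cons (c 0) t)) k (Fin.tail c)
              (fun i => Fin.tail (u i))
              (fun i hi l hl => agree i hi l.succ (Fin.succ_lt_succ_iff.2 hl)) inj
        _ ≤ mixedNorm q f := mixedNorm_cons_le_mixedNorm (hq 0) f (c 0)

end MixedNorm

section Holder

variable {ι α E : Type*} [NormedAddCommGroup E]

lemma sum_prod_rpow_le_card_rpow_mul_prod_rpow_sum (S : Finset ι) (J : Finset α)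
    (f : ι → α → ℝ≥0) {w : ι → ℝ} (hw : ∀ i, 0 ≤ w i) (hw_sum : ∑ i ∈ S, w i ≤ 1) :
    ∑ j ∈ J, ∏ i ∈ S, f i j ^ w i ≤
      (J.card : ℝ≥0) ^ (1 - ∑ i ∈ S, w i) * ∏ i ∈ S, (∑ j ∈ J, f i j) ^ w i := by
  let _ : MeasurableSpace α := ⊤
  have holder := ENNReal.lintegral_mul_prod_norm_pow_le
    (μ := MeasureTheory.Measure.count.restrict (J : Set α)) S (g := fun _ => 1)
    (f := fun i j => (f i j : ℝ≥0∞)) (by fun_prop) (fun i _ => measurable_from_top.aemeasurable)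
    (1 - ∑ i ∈ S, w i) (sub_add_cancel 1 _) (sub_nonneg.2 hw_sum) fun i _ => hw i
  simp only [MeasureTheory.lintegral_finset, MeasureTheory.Measure.count_singleton, mul_one,
    ENNReal.one_rpow, one_mul, Finset.sum_const, nsmul_eq_mul] at holder
  simpa only [ENNReal.coe_rpow_of_nonneg, hw, sub_nonneg.2 hw_sum, ← ENNReal.coe_le_coe,
    ENNReal.coe_mul, ENNReal.ofNNReal_finsetSum, ENNReal.ofNNReal_finsetProd,
    ENNReal.coe_natCast] using holder

lemma exists_nnnorm_apply_le_nnnorm_mul_rpow {p : ℝ≥0∞} [Fact (1 ≤ p)]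
    (x : lp (fun _ : α => E) p) (J : Finset α) :
    ∃ f : α → ℝ≥0, (∀ j, ‖x j‖₊ ≤ ‖x‖₊ * f j ^ p⁻¹.toReal) ∧ ∑ j ∈ J, f j ≤ 1 := by
  have hp : p ≠ 0 := (zero_lt_one.trans_le Fact.out).ne'
  have apply_le (j : α) : ‖x j‖₊ ≤ ‖x‖₊ := lp.norm_apply_le_norm hp x j
  obtain rfl | hp_top := eq_or_ne p ∞
  · -- The exponent `∞⁻¹` is `0`, and `0 ^ 0 = 1`.
    exact ⟨0, fun j => by simpa using apply_le j, by simp⟩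
  have hr : 0 < p.toReal := ENNReal.toReal_pos hp hp_top
  refine ⟨fun j => (‖x j‖₊ / ‖x‖₊) ^ p.toReal, fun j => ?_, ?_⟩
  · rw [ENNReal.toReal_inv, NNReal.rpow_rpow_inv hr.ne']
    obtain hx | hx := eq_or_ne ‖x‖₊ 0
    · simpa [hx] using apply_le j
    · rw [mul_div_cancel₀ _ hx]
  · simp only [NNReal.div_rpow, ← Finset.sum_div]
    refine div_le_one_of_le₀ ?_ zero_le
    rw [← NNReal.coe_le_coe]
    push_cast
    exact lp.sum_rpow_le_norm_rpow hr x J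

lemma sum_prod_nnnorm_apply_le_card_rpow_mul_prod_nnnorm {p : ι → ℝ≥0∞}
    [∀ i, Fact (1 ≤ p i)] (S : Finset ι) (J : Finset α) (hS : ∑ i ∈ S, (p i)⁻¹.toReal ≤ 1)
    (x : ∀ i, lp (fun _ : α => E) (p i)) :
    ∑ j ∈ J, ∏ i ∈ S, ‖x i j‖₊ ≤
      (J.card : ℝ≥0) ^ (1 - ∑ i ∈ S, (p i)⁻¹.toReal) * ∏ i ∈ S, ‖x i‖₊ := by
  choose f apply_le sum_le using fun i => exists_nnnorm_apply_le_nnnorm_mul_rpow (x i) J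
  have hw (i : ι) : 0 ≤ (p i)⁻¹.toReal := ENNReal.toReal_nonneg
  calc ∑ j ∈ J, ∏ i ∈ S, ‖x i j‖₊
      ≤ ∑ j ∈ J, ∏ i ∈ S, ‖x i‖₊ * f i j ^ (p i)⁻¹.toReal := by
        gcongr with j _ i _
        exact apply_le i j
    _ = (∑ j ∈ J, ∏ i ∈ S, f i j ^ (p i)⁻¹.toReal) * ∏ i ∈ S, ‖x i‖₊ := by
        simp only [Finset.prod_mul_distrib, ← Finset.mul_sum]
        rw [mul_comm]
    _ ≤ (J.card : ℝ≥0) ^ (1 - ∑ i ∈ S, (p i)⁻¹.toReal) *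
          (∏ i ∈ S, (∑ j ∈ J, f i j) ^ (p i)⁻¹.toReal) * ∏ i ∈ S, ‖x i‖₊ := by
        gcongr
        exact sum_prod_rpow_le_card_rpow_mul_prod_rpow_sum S J f hw hS
    _ ≤ (J.card : ℝ≥0) ^ (1 - ∑ i ∈ S, (p i)⁻¹.toReal) * ∏ i ∈ S, ‖x i‖₊ := by
        gcongr
        exact mul_le_of_le_one_right' <|
          Finset.prod_le_one' fun i _ => NNReal.rpow_le_one (sum_le i) (hw i)

end Holder

section PartialDiagonalForm

variable (𝕂 : Type*) [NontriviallyNormedField 𝕂] {ι α : Type*} [Fintype ι]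
  (p : ι → ℝ≥0∞) [∀ i, Fact (1 ≤ p i)]

/-- The product of coordinates `x ↦ ∏ i, x i (c i)`, as a multilinear form on `ℓ_{p i}` spaces;
the summand of `partialDiagonalForm`. -/
def coordMonomial (c : ι → α) :
    ContinuousMultilinearMap 𝕂 (fun i => lp (fun _ : α => 𝕂) (p i)) 𝕂 :=
  (ContinuousMultilinearMap.mkPiAlgebra 𝕂 ι 𝕂).compContinuousLinearMap
    fun i => lp.evalCLM 𝕂 (fun _ : α => 𝕂) (p i) (c i)

variable {p} in
lemma coordMonomial_apply (c : ι → α) (x : ∀ i, lp (fun _ : α => 𝕂) (p i)) :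
    coordMonomial 𝕂 p c x = ∏ i, x i (c i) := rfl

lemma coordMonomial_single [DecidableEq α] (c t : ι → α) :
    coordMonomial 𝕂 p c (fun i => lp.single (p i) (t i) 1) = if c = t then 1 else 0 := by
  simp only [coordMonomial_apply, lp.single_apply, Pi.single_apply, Finset.prod_ite_zero,
    Finset.prod_const_one, Finset.mem_univ, true_imp_iff, funext_iff]

variable [DecidableEq ι] (S : Finset ι) (J : Finset α) (a : α)

/-- The form `x ↦ ∑ j ∈ J, ∏ i ∈ S, x i j * ∏ i ∉ S, x i a`: diagonal in the variables from `S`,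
and evaluation at the coordinate `a` in all the others.
It is the test form whose mixed norm is large compared with its operator norm. -/
def partialDiagonalForm : ContinuousMultilinearMap 𝕂 (fun i => lp (fun _ : α => 𝕂) (p i)) 𝕂 :=
  ∑ j ∈ J, coordMonomial 𝕂 p (S.piecewise (fun _ => j) fun _ => a)

lemma partialDiagonalForm_single [DecidableEq α] (t : ι → α) :
    partialDiagonalForm 𝕂 p S J a (fun i => lp.single (p i) (t i) 1) =
      ({j ∈ J | S.piecewise (fun _ => j) (fun _ => a) = t}.card : 𝕂) := by
  simp only [partialDiagonalForm, sum_apply, coordMonomial_single, Finset.sum_boole]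

lemma nnnorm_partialDiagonalForm_le_card_rpow (hS : ∑ i ∈ S, (p i)⁻¹.toReal ≤ 1) :
    ‖partialDiagonalForm 𝕂 p S J a‖₊ ≤ (J.card : ℝ≥0) ^ (1 - ∑ i ∈ S, (p i)⁻¹.toReal) := by
  have hp (i : ι) : p i ≠ 0 := (zero_lt_one.trans_le Fact.out).ne'
  refine ContinuousMultilinearMap.opNNNorm_le_iff.2 fun x => ?_
  have prod_split (j : α) : ∏ i, ‖x i (S.piecewise (fun _ => j) (fun _ => a) i)‖₊ =
      (∏ i ∈ S, ‖x i j‖₊) * ∏ i ∈ Sᶜ, ‖x i a‖₊ := by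
    rw [← Finset.prod_mul_prod_compl S]
    congr 1 <;> refine Finset.prod_congr rfl fun i hi => ?_
    · rw [Finset.piecewise_eq_of_mem _ _ _ hi]
    · rw [Finset.piecewise_eq_of_notMem _ _ _ (Finset.mem_compl.1 hi)]
  calc ‖partialDiagonalForm 𝕂 p S J a x‖₊
      ≤ ∑ j ∈ J, ∏ i, ‖x i (S.piecewise (fun _ => j) (fun _ => a) i)‖₊ := by
        simp only [partialDiagonalForm, sum_apply, coordMonomial_apply, ← nnnorm_prod]
        exact nnnorm_sum_le _ _
    _ = (∑ j ∈ J, ∏ i ∈ S, ‖x i j‖₊) * ∏ i ∈ Sᶜ, ‖x i a‖₊ := by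
        simp only [prod_split, Finset.sum_mul]
    _ ≤ (J.card : ℝ≥0) ^ (1 - ∑ i ∈ S, (p i)⁻¹.toReal) * (∏ i ∈ S, ‖x i‖₊) *
          ∏ i ∈ Sᶜ, ‖x i‖₊ := by
        gcongr with i
        · exact sum_prod_nnnorm_apply_le_card_rpow_mul_prod_nnnorm S J hS x
        · exact lp.norm_apply_le_norm (hp i) (x i) a
    _ = (J.card : ℝ≥0) ^ (1 - ∑ i ∈ S, (p i)⁻¹.toReal) * ∏ i, ‖x i‖₊ := by
        rw [mul_assoc, Finset.prod_mul_prod_compl]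

end PartialDiagonalForm

lemma card_rpow_le_mixedNorm_partialDiagonalForm (𝕂 : Type*) [RCLike 𝕂] {m : ℕ} (p : Fin m → ℝ≥0∞)
    [∀ i, Fact (1 ≤ p i)] (σ : Equiv.Perm (Fin m)) {q : Fin m → ℝ} (hq : ∀ l, 0 < q l) (k : Fin m)
    (J : Finset ℕ) (a : ℕ) :
    (J.card : ℝ≥0∞) ^ (1 / q k) ≤ mixedNorm q fun t => ENNReal.ofReal (RCLike.re
      (partialDiagonalForm 𝕂 p ((Finset.Ici k).map σ.toEmbedding) J a
        fun i => lp.single (p i) (t (σ.symm i)) 1)) := by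
  set S := (Finset.Ici k).map σ.toEmbedding
  let c (j : ℕ) : Fin m → ℕ := S.piecewise (fun _ => j) fun _ => a
  set f : (Fin m → ℕ) → ℝ≥0∞ := fun t => ENNReal.ofReal (RCLike.re
    (partialDiagonalForm 𝕂 p S J a fun i => lp.single (p i) (t (σ.symm i)) 1))
  have mem_S (l : Fin m) : σ l ∈ S ↔ k ≤ l := by simp [S]
  have one_le (j : ℕ) (hj : j ∈ J) : 1 ≤ f (c j ∘ σ) := by
    have : 0 < {i ∈ J | c i = c j}.card := Finset.card_pos.2 ⟨j, by simp [hj]⟩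
    simp only [f, Function.comp_apply, Equiv.apply_symm_apply, partialDiagonalForm_single,
      RCLike.natCast_re, ENNReal.ofReal_natCast]
    exact_mod_cast this
  calc (J.card : ℝ≥0∞) ^ (1 / q k)
      = (∑ j ∈ J, 1) ^ (1 / q k) := by rw [Finset.sum_const, nsmul_one]
    _ ≤ (∑ j ∈ J, f (c j ∘ σ) ^ q k) ^ (1 / q k) := by
        have := (hq k).le
        gcongr with j hj
        exact ENNReal.one_le_rpow (one_le j hj) (hq k)
    _ ≤ mixedNorm q f := by
        refine rpow_sum_rpow_le_mixedNorm_of_injOn hq f k (fun _ => a) J (fun j => c j ∘ σ)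
          (fun j _ l hl => ?_) (fun i _ j _ hij => ?_)
        · simp [c, mem_S, hl]
        · simpa [c, mem_S] using hij

theorem anisotropic_hardy_littlewood_necessity_general
    (𝕂 : Type*) [RCLike 𝕂] {m : ℕ} (p : Fin m → ℝ≥0∞) [∀ i, Fact (1 ≤ p i)]
    (σ : Equiv.Perm (Fin m)) (q : Fin m → ℝ) (hq : ∀ l, 0 < q l) (C : ℝ≥0)
    (H : ∀ A : ContinuousMultilinearMap 𝕂 (fun i => lp (fun _ : ℕ => 𝕂) (p i)) 𝕂,
      (∀ j : Fin m → ℕ, ∃ r : ℝ, 0 ≤ r ∧ A (fun i => lp.single (p i) (j i) 1) = (r : 𝕂)) →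
      mixedNorm q (fun t => ENNReal.ofReal (RCLike.re
        (A fun i => lp.single (p i) (t (σ.symm i)) 1))) ≤ C * ENNReal.ofReal ‖A‖)
    (k : Fin m) (hk : ∑ l ∈ Finset.Ici k, (p (σ l))⁻¹.toReal < 1) :
    1 / (1 - ∑ l ∈ Finset.Ici k, (p (σ l))⁻¹.toReal) ≤ q k := by
  set S := (Finset.Ici k).map σ.toEmbedding
  have sum_S : ∑ i ∈ S, (p i)⁻¹.toReal = ∑ l ∈ Finset.Ici k, (p (σ l))⁻¹.toReal :=
    Finset.sum_map _ _ _
  rw [← sum_S] at hk ⊢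
  have growth (n : ℕ) : (n : ℝ≥0) ^ (1 / q k) ≤ C * n ^ (1 - ∑ i ∈ S, (p i)⁻¹.toReal) := by
    set A := partialDiagonalForm 𝕂 p S (Finset.range n) 0
    have lower := card_rpow_le_mixedNorm_partialDiagonalForm 𝕂 p σ hq k (Finset.range n) 0
    have upper : ‖A‖₊ ≤ (n : ℝ≥0) ^ (1 - ∑ i ∈ S, (p i)⁻¹.toReal) := by
      simpa using nnnorm_partialDiagonalForm_le_card_rpow 𝕂 p S (Finset.range n) 0 hk.le
    have inequality := H A fun j =>
      ⟨_, Nat.cast_nonneg _, by rw [partialDiagonalForm_single, RCLike.ofReal_natCast]⟩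
    rw [← ENNReal.coe_le_coe]
    calc (((n : ℝ≥0) ^ (1 / q k) : ℝ≥0) : ℝ≥0∞)
        = (Finset.range n).card ^ (1 / q k) := by
          rw [ENNReal.coe_rpow_of_nonneg _ (one_div_pos.2 (hq k)).le, ENNReal.coe_natCast,
            Finset.card_range]
      _ ≤ C * ENNReal.ofReal ‖A‖ := lower.trans inequality
      _ = (C * ‖A‖₊ : ℝ≥0) := by rw [ofReal_norm, enorm_eq_nnnorm, ENNReal.coe_mul]
      _ ≤ (C * n ^ (1 - ∑ i ∈ S, (p i)⁻¹.toReal) : ℝ≥0) := by gcongr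
  have hle : 1 / q k ≤ 1 - ∑ i ∈ S, (p i)⁻¹.toReal :=
    le_of_eventually_natCast_rpow_le_const_mul_rpow (.of_forall fun n => by exact_mod_cast growth n)
  exact (one_div_le (hq k) (sub_pos.2 hk)).1 hle

/-- **Sharp anisotropic Hardy–Littlewood inequality for positive multilinear forms
(necessity).**  Let `m ≥ 1`, `p₁, …, p_m ∈ (1, ∞)` with `1/p₁ + ⋯ + 1/p_m < 1`, let
`σ` be a permutation of `{1, …, m}` and let `q₁, …, q_m ∈ (0, ∞)`.  If the
anisotropic inequality
`(Σ_{j_{σ(1)}} (Σ_{j_{σ(2)}} ⋯ (Σ_{j_{σ(m)}} A(e_{j₁},…,e_{j_m})^{q_m})^{q_{m-1}/q_m} ⋯ )^{q₁/q₂})^{1/q₁} ≤ ‖A‖`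
holds for every bounded nonnegative `m`-linear form `A : ℓ_{p₁} × ⋯ × ℓ_{p_m} → 𝕂`,
then `q_k ≥ δ^{p_{σ(k)},…,p_{σ(m)}} = 1/(1 − (1/p_{σ(k)} + ⋯ + 1/p_{σ(m)}))` for
every `k`. -/
theorem anisotropic_hardy_littlewood_necessity
    (𝕂 : Type*) [RCLike 𝕂] (m : ℕ) (hm : 0 < m)
    (p : Fin m → ℝ) (hp : ∀ i, 1 < p i)
    [∀ i, Fact (1 ≤ ENNReal.ofReal (p i))]
    (hsum : ∑ i, 1 / p i < 1)
    (σ : Equiv.Perm (Fin m))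
    (q : Fin m → ℝ) (hq : ∀ k, 0 < q k)
    (H : ∀ A : ContinuousMultilinearMap 𝕂
        (fun i : Fin m => lp (fun _ : ℕ => 𝕂) (ENNReal.ofReal (p i))) 𝕂,
      (∀ j : Fin m → ℕ, ∃ r : ℝ, 0 ≤ r ∧
        A (fun i => lp.single (ENNReal.ofReal (p i)) (j i) 1) = (r : 𝕂)) →
      mixedNorm q
          (fun t : Fin m → ℕ =>
            ENNReal.ofReal (RCLike.re
              (A (fun i => lp.single (ENNReal.ofReal (p i)) (t (σ.symm i)) 1))))
        ≤ ENNReal.ofReal ‖A‖) :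
    ∀ k : Fin m, 1 / (1 - ∑ l ∈ Finset.Ici k, 1 / p (σ l)) ≤ q k := by
  intro k
  have hp_pos (i : Fin m) : 0 < p i := zero_lt_one.trans (hp i)
  have tail_lt : ∑ l ∈ Finset.Ici k, 1 / p (σ l) < 1 := calc
    _ ≤ ∑ l, 1 / p (σ l) := Finset.sum_le_univ_sum_of_nonneg fun l => (one_div_pos.2 (hp_pos _)).le
    _ = ∑ i, 1 / p i := Equiv.sum_comp σ fun i => 1 / p i
    _ < 1 := hsum
  have one_div_p (i : Fin m) : 1 / p i = (ENNReal.ofReal (p i))⁻¹.toReal := by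
    rw [ENNReal.toReal_inv, ENNReal.toReal_ofReal (hp_pos i).le, one_div]
  simp only [one_div_p] at tail_lt ⊢
  exact anisotropic_hardy_littlewood_necessity_general 𝕂 (fun i => ENNReal.ofReal (p i)) σ q hq 1
    (fun A hA => by simpa only [ENNReal.coe_one, one_mul] using H A hA) k tail_lt
end
end

section
/- Let p ∈ (1, ∞) and q₁ ∈ (0, ∞). Suppose that ( Σ_{j=1}^∞ A(e_j)^{q₁} )^{1/q₁} ≤ ‖A‖ holds for every bounded linear functional A : ℓ_p → 𝕂 with A(e_j) ≥ 0 for all j. Then q₁ ≥ p*, the conjugate exponent of p. -/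
open scoped ENNReal

/-!
Test the inequality on the functional that adds up the coordinates in a finite set `s`. By Hölder's
inequality its norm is at most `#s ^ (1 / p*)`, while the left-hand side is exactly `#s ^ (1 / q₁)`.
As soon as `s` has two elements, comparing exponents gives `1 / q₁ ≤ 1 / p*`.
-/

section CoordinateSum

variable {ι 𝕜 E : Type*} {p p' : ℝ≥0∞}

theorem sum_norm_le_card_rpow_mul_norm {F : ι → Type*} [∀ i, NormedAddCommGroup (F i)]
    [p.HolderConjugate p'] (x : lp F p) (s : Finset ι) :
    ∑ i ∈ s, ‖x i‖ ≤ (s.card : ℝ) ^ p'⁻¹.toReal * ‖x‖ := by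
  rcases eq_or_ne p ∞ with rfl | hp_top
  · obtain rfl : p' = 1 := (ENNReal.HolderConjugate.eq_top_iff_eq_one ∞ p').mp rfl
    simpa using Finset.sum_le_card_nsmul s _ ‖x‖ fun i _ ↦
      lp.norm_apply_le_norm ENNReal.top_ne_zero x i
  · have hp_one : 1 ≤ p.toReal := by
      simpa using ENNReal.toReal_mono hp_top (ENNReal.HolderConjugate.one_le p p')
    have hp_pos : 0 < p.toReal := zero_lt_one.trans_le hp_one
    have exponent_eq : p'⁻¹.toReal * p.toReal = p.toReal - 1 := by
      rw [← ENNReal.toReal_mul, mul_comm, ← div_eq_mul_inv,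
        ENNReal.HolderConjugate.div_conj_eq_sub_one,
        ENNReal.toReal_sub_of_le (ENNReal.HolderConjugate.one_le p p') hp_top,
        ENNReal.toReal_one]
    rw [← Real.rpow_le_rpow_iff (by positivity) (by positivity [lp.norm_nonneg' x]) hp_pos]
    calc (∑ i ∈ s, ‖x i‖) ^ p.toReal
        ≤ (s.card : ℝ) ^ (p.toReal - 1) * ∑ i ∈ s, ‖x i‖ ^ p.toReal :=
          Real.rpow_sum_le_const_mul_sum_rpow_of_nonneg s hp_one fun i _ ↦ norm_nonneg (x i)
      _ ≤ (s.card : ℝ) ^ (p.toReal - 1) * ‖x‖ ^ p.toReal := by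
          gcongr
          exact lp.sum_rpow_le_norm_rpow hp_pos x s
      _ = ((s.card : ℝ) ^ p'⁻¹.toReal * ‖x‖) ^ p.toReal := by
          rw [Real.mul_rpow (by positivity) (lp.norm_nonneg' x), ← Real.rpow_mul (by positivity),
            exponent_eq]

variable [NontriviallyNormedField 𝕜] [NormedAddCommGroup E] [NormedSpace 𝕜 E]
  [Fact (1 ≤ p)]

variable (𝕜 E p) in
/-- The continuous linear map `x ↦ ∑ i ∈ s, x i` on `ℓ_p`; for `E = 𝕜` it is the functional on
which the exponent is tested. -/
noncomputable def coordSum (s : Finset ι) : lp (fun _ : ι ↦ E) p →L[𝕜] E :=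
  ∑ i ∈ s, lp.evalCLM 𝕜 (fun _ ↦ E) p i

theorem coordSum_apply (s : Finset ι) (x : lp (fun _ : ι ↦ E) p) :
    coordSum 𝕜 E p s x = ∑ i ∈ s, x i := by
  simp only [coordSum, sum_apply]
  rfl

theorem coordSum_single [DecidableEq ι] (s : Finset ι) (j : ι) (a : E) :
    coordSum 𝕜 E p s (lp.single p j a) = if j ∈ s then a else 0 := by
  simp [coordSum_apply, lp.single_apply, Pi.single_apply]

theorem norm_coordSum_le [p.HolderConjugate p'] (s : Finset ι) :
    ‖coordSum 𝕜 E p s‖ ≤ (s.card : ℝ) ^ p'⁻¹.toReal :=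
  ContinuousLinearMap.opNorm_le_bound _ (by positivity) fun x ↦ by
    rw [coordSum_apply]
    exact (norm_sum_le s _).trans (sum_norm_le_card_rpow_mul_norm x s)

end CoordinateSum

section Optimality

variable {ι 𝕂 : Type*} [DecidableEq ι] [RCLike 𝕂] {p : ℝ≥0∞} [Fact (1 ≤ p)] {q : ℝ}

theorem exists_nonneg_coordSum_single_one_eq (s : Finset ι) (j : ι) :
    ∃ r : ℝ, 0 ≤ r ∧ coordSum 𝕂 𝕂 p s (lp.single p j 1) = (r : 𝕂) :=
  ⟨if j ∈ s then 1 else 0, by positivity, by rw [coordSum_single]; split_ifs <;> simp⟩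

theorem tsum_ofReal_re_coordSum_single_one_rpow (hq : 0 < q) (s : Finset ι) :
    ∑' j, ENNReal.ofReal (RCLike.re (coordSum 𝕂 𝕂 p s (lp.single p j 1))) ^ q = s.card := by
  have summand_eq (j : ι) :
      ENNReal.ofReal (RCLike.re (coordSum 𝕂 𝕂 p s (lp.single p j 1))) ^ q =
        if j ∈ s then 1 else 0 := by
    rw [coordSum_single]
    split_ifs <;> simp [hq]
  simp_rw [summand_eq]
  rw [tsum_eq_sum (s := s) fun j hj ↦ if_neg hj]
  simp

theorem linear_case_optimality_general [Nontrivial ι] {pstar : ℝ≥0∞} [p.HolderConjugate pstar]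
    (hq : 0 < q)
    (H : ∀ A : lp (fun _ : ι ↦ 𝕂) p →L[𝕂] 𝕂,
      (∀ j : ι, ∃ r : ℝ, 0 ≤ r ∧ A (lp.single p j 1) = (r : 𝕂)) →
      (∑' j : ι, ENNReal.ofReal (RCLike.re (A (lp.single p j 1))) ^ q) ^ (1 / q) ≤
        ENNReal.ofReal ‖A‖) :
    pstar ≤ ENNReal.ofReal q := by
  obtain ⟨a, b, hab⟩ := exists_pair_ne ι
  have two_rpow_le : (2 : ℝ≥0∞) ^ (1 / q) ≤ 2 ^ pstar⁻¹.toReal := by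
    have test := H (coordSum 𝕂 𝕂 p {a, b}) (exists_nonneg_coordSum_single_one_eq _)
    have norm_le := norm_coordSum_le (𝕜 := 𝕂) (E := 𝕂) (p := p) (p' := pstar) {a, b}
    rw [tsum_ofReal_re_coordSum_single_one_rpow hq] at test
    simpa [Finset.card_pair hab, ← ENNReal.ofReal_rpow_of_pos] using
      test.trans (ENNReal.ofReal_le_ofReal norm_le)
  have exponent_le : 1 / q ≤ pstar⁻¹.toReal := le_of_not_gt fun h ↦
    two_rpow_le.not_gt <|
      ENNReal.rpow_lt_rpow_of_exponent_lt ENNReal.one_lt_two ENNReal.ofNat_ne_top h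
  rw [← ENNReal.inv_le_inv, ← ENNReal.ofReal_inv_of_pos hq, ← one_div]
  exact ENNReal.ofReal_le_of_le_toReal exponent_le

end Optimality

/-- **Optimality of the exponent in the linear (one-variable) case.**
Let `p ∈ (1, ∞)` and `q₁ ∈ (0, ∞)`.  If `(Σ_j A(e_j)^{q₁})^{1/q₁} ≤ ‖A‖` holds
for every bounded linear functional `A : ℓ_p → 𝕂` with `A(e_j) ≥ 0` for all `j`,
then `q₁ ≥ p*`, the conjugate exponent of `p`. -/
theorem linear_case_optimality
    (𝕂 : Type*) [RCLike 𝕂]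
    (p : ℝ) (hp : 1 < p) [Fact (1 ≤ ENNReal.ofReal p)]
    (pstar : ℝ) (hpstar : 1 / p + 1 / pstar = 1)
    (q₁ : ℝ) (hq₁ : 0 < q₁)
    (H : ∀ A : lp (fun _ : ℕ => 𝕂) (ENNReal.ofReal p) →L[𝕂] 𝕂,
      (∀ j : ℕ, ∃ r : ℝ, 0 ≤ r ∧ A (lp.single (ENNReal.ofReal p) j 1) = (r : 𝕂)) →
      (∑' j : ℕ,
          (ENNReal.ofReal (RCLike.re (A (lp.single (ENNReal.ofReal p) j 1)))) ^ q₁)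
        ^ (1 / q₁) ≤ ENNReal.ofReal ‖A‖) :
    pstar ≤ q₁ := by
  have := (Real.holderConjugate_iff.mpr ⟨hp, by simpa using hpstar⟩).ennrealOfReal
  exact (ENNReal.ofReal_le_ofReal_iff hq₁.le).mp (linear_case_optimality_general hq₁ H)
end
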